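/- arXiv:2305.17225 — 3 statements merged into one kernel-verified Lean document; each statement's English description precedes it below -/
import Mathlib

section
/- Let G be a DAG on [d]. Consider two models given by C¹ conditional-density families (p_i) and (q_i) for G together with, for each target set τ in a finite collection T of strict subsets of [d] with ⋃_{τ∈T} τ = [d] and n_τ := |τ|, a family of perfect fat-hand interventional regimes with target τ, in which the factors indexed by τ are replaced by a strictly positive C¹ joint intervened density over z_τ ∈ ℝ^{n_τ} (with no conditioning on other variables). Assume the block-interventional discrepancy for each τ ∈ T in both models: if τ has no parents in [d]∖τ, there are n_τ interventional regimes with target τ such that the n_τ×n_τ matrix with (s,j)-entry ∂/∂z_{τ,j}[log q^s_τ − log q^0_τ](z_τ) is invertible for Lebesgue-a.e. z_τ ∈ ℝ^{n_τ}, where q^s_τ is the intervened block density of the s-th such regime and q^0_τ is the unintervened joint mechanism of the block; otherwise, there are n_τ + 1 interventional regimes with target τ such that the same matrix, formed with the log-differences between intervened block densities only (s = 0,…,n_τ indexing interventions, no unintervened regime), is invertible a.e. Let f, f′ : ℝ^d → ℝ^d be C¹ diffeomorphisms such that the pushforward f_*P^r equals f′_*Q^r for the unintervened regime and for every interventional regime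 r. Then φ := f′⁻¹∘f is block-identifiable: for each τ ∈ T the components (φ_i)_{i∈τ} depend only on the coordinates z_τ, and the induced map φ_τ : ℝ^{n_τ} → ℝ^{n_τ} is a diffeomorphism. -/
open MeasureTheory

noncomputable section

/-- `f` depends only on the coordinates in `S`. -/
def DependsOnlyOn {d : ℕ} {α : Type*} (f : (Fin d → ℝ) → α) (S : Finset (Fin d)) : Prop :=
  ∀ z w : Fin d → ℝ, (∀ i ∈ S, z i = w i) → f z = f w

/-- `f` is a C¹ diffeomorphism between (real) normed spaces. -/
def IsC1Diffeo {E F : Type*} [NormedAddCommGroup E] [NormedSpace ℝ E]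
    [NormedAddCommGroup F] [NormedSpace ℝ F] (f : E → F) : Prop :=
  ContDiff ℝ 1 f ∧ ∃ g : F → E, ContDiff ℝ 1 g ∧
    Function.LeftInverse g f ∧ Function.RightInverse g f

/-- The measure on `ℝ^d` with density `ρ` with respect to Lebesgue measure. -/
def densityMeasure {d : ℕ} (ρ : (Fin d → ℝ) → ℝ) : Measure (Fin d → ℝ) :=
  volume.withDensity fun z => ENNReal.ofReal (ρ z)

/-- The measure on `ℝ` with density `r` with respect to Lebesgue measure. -/
def densityMeasure₁ (r : ℝ → ℝ) : Measure ℝ :=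
  volume.withDensity fun x => ENNReal.ofReal (r x)

/-- Membership in `S_scaling`: the map acts by an elementwise C¹ diffeomorphism of `ℝ`
on each coordinate. -/
def InSScaling {d : ℕ} (h : (Fin d → ℝ) → (Fin d → ℝ)) : Prop :=
  ∃ hs : Fin d → ℝ → ℝ, (∀ i, IsC1Diffeo (hs i)) ∧ ∀ (z : Fin d → ℝ) (i : Fin d), h z i = hs i (z i)

/-- Membership in `S_reparam`: a coordinate permutation composed with an element of
`S_scaling`. -/
def InSReparam {d : ℕ} (g : (Fin d → ℝ) → (Fin d → ℝ)) : Prop :=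
  ∃ (σ : Equiv.Perm (Fin d)) (hs : Fin d → ℝ → ℝ),
    (∀ i, IsC1Diffeo (hs i)) ∧ ∀ (z : Fin d → ℝ) (i : Fin d), g z i = hs (σ i) (z (σ i))

/-- A C¹ conditional-density family for the DAG on `Fin d` with parent map `pa`:
each `p i` is strictly positive, C¹, depends only on the coordinates `{i} ∪ pa i`,
and integrates to `1` in the `i`-th coordinate. -/
def IsCondFamily {d : ℕ} (pa : Fin d → Finset (Fin d))
    (p : Fin d → (Fin d → ℝ) → ℝ) : Prop :=
  ∀ i, (∀ z, 0 < p i z) ∧ ContDiff ℝ 1 (p i) ∧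
    DependsOnlyOn (p i) (insert i (pa i)) ∧
    ∀ z, (∫ t : ℝ, p i (Function.update z i t)) = 1

/-- A strictly positive C¹ probability density on `ℝ`. -/
def IsC1Density (r : ℝ → ℝ) : Prop :=
  (∀ x, 0 < r x) ∧ ContDiff ℝ 1 r ∧ (∫ x : ℝ, r x) = 1

/-- The joint density `z ↦ ∏ i, p i z` of a conditional-density family. -/
def jointDensity {d : ℕ} (p : Fin d → (Fin d → ℝ) → ℝ) : (Fin d → ℝ) → ℝ :=
  fun z => ∏ i, p i z

/-- `j` is an ancestor of `i` in the DAG with parent map `pa` (transitive closure of the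
parent relation). -/
def IsAnc {d : ℕ} (pa : Fin d → Finset (Fin d)) (j i : Fin d) : Prop :=
  Relation.TransGen (fun a b => a ∈ pa b) j i

/-- The observational joint mechanism of the block `τ`: the product of the causal mechanisms
of the nodes in `τ`. -/
def blockMech {d : ℕ} (p : Fin d → (Fin d → ℝ) → ℝ) (τ : Finset (Fin d)) :
    (Fin d → ℝ) → ℝ := fun z => ∏ i ∈ τ, p i z

/-- The `j`-th element of the block `τ` (under the canonical enumeration of `τ`). -/
def coordOf {d : ℕ} (τ : Finset (Fin d)) (j : Fin τ.card) : Fin d :=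
  ((τ.equivFin.symm j : τ) : Fin d)

/-- A strictly positive C¹ joint intervened density over the block `τ` (no conditioning on
other variables): it depends only on the coordinates in `τ` and integrates to 1 over the
block. -/
def IsBlockDensity {d : ℕ} (τ : Finset (Fin d)) (r : (Fin d → ℝ) → ℝ) : Prop :=
  (∀ z, 0 < r z) ∧ ContDiff ℝ 1 r ∧ DependsOnlyOn r τ ∧
    ∀ z : Fin d → ℝ,
      (∫ y : {x // x ∈ τ} → ℝ, r (fun j => if h : j ∈ τ then y ⟨j, h⟩ else z j)) = 1

/-- Embed a configuration of the block `τ` into `ℝ^d`, filling the other coordinates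
with `0`. -/
def fillBlock {d : ℕ} (τ : Finset (Fin d)) (y : {x // x ∈ τ} → ℝ) : Fin d → ℝ :=
  fun j => if h : j ∈ τ then y ⟨j, h⟩ else 0

/-- The map `ℝ^τ → ℝ^τ` induced by the components of `φ` indexed by `τ` (well defined when
those components depend only on the coordinates in `τ`). -/
def blockMap {d : ℕ} (φ : (Fin d → ℝ) → (Fin d → ℝ)) (τ : Finset (Fin d)) :
    ({x // x ∈ τ} → ℝ) → ({x // x ∈ τ} → ℝ) :=
  fun y i => φ (fillBlock τ y) (i : Fin d)

/-!
Matching pushforwards under a diffeomorphism give `ρ = (σ ∘ φ) |det Dφ|` in every regime, and the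
ratio of two regimes of the same target `τ` cancels both the Jacobian and the mechanisms outside
`τ`. Hence the block log-ratios satisfy `h s = h' s ∘ φ`, where `h s` and `h' s` are functions of
the block. Differentiating in a direction `v` that does not move the block gives
`D(h' s) (Dφ v) = 0` for all `s`; where the discrepancy matrix is invertible this forces `Dφ v` not
to move the block either. This is a closed condition holding on a dense set, hence everywhere, so
the block components of `φ` depend only on the block. A block triangular invertible Jacobian has a
block triangular inverse, so `φ⁻¹` has the same property and induces the inverse of the block map.
-/

/-! ### Densities and their pushforwards -/

/-- A continuous strictly positive real function: what the comparison of pushforwards needs of a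
density, without normalisation. -/
structure IsContPos {X : Type*} [TopologicalSpace X] (ρ : X → ℝ) : Prop where
  continuous : Continuous ρ
  pos : ∀ x, 0 < ρ x

namespace IsContPos

variable {X ι : Type*} [TopologicalSpace X] {ρ σ : X → ℝ}

lemma mul (hρ : IsContPos ρ) (hσ : IsContPos σ) : IsContPos fun x => ρ x * σ x :=
  ⟨hρ.continuous.mul hσ.continuous, fun x => mul_pos (hρ.pos x) (hσ.pos x)⟩

lemma div (hρ : IsContPos ρ) (hσ : IsContPos σ) : IsContPos fun x => ρ x / σ x :=
  ⟨hρ.continuous.div hσ.continuous fun x => (hσ.pos x).ne',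
    fun x => div_pos (hρ.pos x) (hσ.pos x)⟩

lemma prod {s : Finset ι} {ρ : ι → X → ℝ} (hρ : ∀ i ∈ s, IsContPos (ρ i)) :
    IsContPos fun x => ∏ i ∈ s, ρ i x :=
  ⟨continuous_finsetProd s fun i hi => (hρ i hi).continuous,
    fun x => Finset.prod_pos fun i hi => (hρ i hi).pos x⟩

lemma comp {Y : Type*} [TopologicalSpace Y] {φ : Y → X} (hρ : IsContPos ρ) (hφ : Continuous φ) :
    IsContPos fun y => ρ (φ y) :=
  ⟨hρ.continuous.comp hφ, fun y => hρ.pos (φ y)⟩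

lemma measurable_ofReal [MeasurableSpace X] [OpensMeasurableSpace X] (hρ : IsContPos ρ) :
    Measurable fun x => ENNReal.ofReal (ρ x) :=
  hρ.continuous.measurable.ennreal_ofReal

end IsContPos

lemma map_withDensity_comp {X Y : Type*} [MeasurableSpace X] [MeasurableSpace Y] {μ : Measure X}
    {φ : X → Y} {g : Y → ENNReal} (hφ : Measurable φ) (hg : Measurable g) :
    (μ.withDensity fun x => g (φ x)).map φ = (μ.map φ).withDensity g := by
  ext s hs
  rw [Measure.map_apply hφ hs, withDensity_apply _ (hφ hs), withDensity_apply _ hs,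
    setLIntegral_map hs hg hφ]

lemma withDensity_ofReal_mul {X : Type*} [TopologicalSpace X] [MeasurableSpace X]
    [OpensMeasurableSpace X] {μ : Measure X} {ρ σ : X → ℝ} (hρ : IsContPos ρ)
    (hσ : IsContPos σ) :
    (μ.withDensity fun x => ENNReal.ofReal (ρ x * σ x)) =
      (μ.withDensity fun x => ENNReal.ofReal (ρ x)).withDensity
        fun x => ENNReal.ofReal (σ x) := by
  rw [← withDensity_mul μ hρ.measurable_ofReal hσ.measurable_ofReal]
  exact congrArg μ.withDensity (funext fun x => ENNReal.ofReal_mul (hρ.pos x).le)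

lemma eq_of_withDensity_ofReal_eq {X : Type*} [TopologicalSpace X] [MeasurableSpace X]
    [OpensMeasurableSpace X] {μ : Measure X} [SigmaFinite μ] [μ.IsOpenPosMeasure] {ρ σ : X → ℝ}
    (hρ : IsContPos ρ) (hσ : IsContPos σ)
    (h : (μ.withDensity fun x => ENNReal.ofReal (ρ x)) =
      μ.withDensity fun x => ENNReal.ofReal (σ x)) :
    ρ = σ := by
  rw [withDensity_eq_iff_of_sigmaFinite hρ.measurable_ofReal.aemeasurable
    hσ.measurable_ofReal.aemeasurable] at h
  refine (hρ.continuous.ae_eq_iff_eq μ hσ.continuous).1 ?_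
  filter_upwards [h] with x hx
  exact (ENNReal.ofReal_eq_ofReal_iff (hρ.pos x).le (hσ.pos x).le).1 hx

-- A ratio of densities transforms without a Jacobian.
lemma div_eq_div_comp_of_map_withDensity_eq {X Y : Type*} [TopologicalSpace X]
    [MeasurableSpace X] [OpensMeasurableSpace X] [TopologicalSpace Y] [MeasurableSpace Y]
    [OpensMeasurableSpace Y] {μ : Measure X} [SigmaFinite μ] [μ.IsOpenPosMeasure]
    {ν : Measure Y} {φ : X → Y} (hφ : Continuous φ) (hφm : MeasurableEmbedding φ)
    {ρ₀ ρ₁ : X → ℝ} {σ₀ σ₁ : Y → ℝ} (hρ₀ : IsContPos ρ₀) (hρ₁ : IsContPos ρ₁)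
    (hσ₀ : IsContPos σ₀) (hσ₁ : IsContPos σ₁)
    (h₀ : (μ.withDensity fun x => ENNReal.ofReal (ρ₀ x)).map φ =
      ν.withDensity fun y => ENNReal.ofReal (σ₀ y))
    (h₁ : (μ.withDensity fun x => ENNReal.ofReal (ρ₁ x)).map φ =
      ν.withDensity fun y => ENNReal.ofReal (σ₁ y)) (x : X) :
    ρ₁ x / ρ₀ x = σ₁ (φ x) / σ₀ (φ x) := by
  have hσ := hσ₁.div hσ₀
  have hmul : ∀ y, σ₀ y * (σ₁ y / σ₀ y) = σ₁ y := fun y => mul_div_cancel₀ _ (hσ₀.pos y).ne'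
  have hmap : (μ.withDensity fun x => ENNReal.ofReal (ρ₀ x * (σ₁ (φ x) / σ₀ (φ x)))).map φ =
      (μ.withDensity fun x => ENNReal.ofReal (ρ₁ x)).map φ :=
    calc
      _ = (ν.withDensity fun y => ENNReal.ofReal (σ₀ y)).withDensity
          fun y => ENNReal.ofReal (σ₁ y / σ₀ y) := by
        rw [withDensity_ofReal_mul hρ₀ (hσ.comp hφ),
          map_withDensity_comp hφm.measurable hσ.measurable_ofReal, h₀]
      _ = ν.withDensity fun y => ENNReal.ofReal (σ₁ y) := by
        simp only [← withDensity_ofReal_mul hσ₀ hσ, hmul]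
      _ = _ := h₁.symm
  have hinj : Function.Injective (Measure.map φ : Measure X → Measure Y) :=
    Function.LeftInverse.injective hφm.comap_map
  have heq := eq_of_withDensity_ofReal_eq (hρ₀.mul (hσ.comp hφ)) hρ₁ (hinj hmap)
  rw [div_eq_iff (hρ₀.pos x).ne', mul_comm]
  exact (congrFun heq x).symm

lemma map_comp_eq_of_map_eq_map {X Y Z : Type*} [MeasurableSpace X] [MeasurableSpace Y]
    [MeasurableSpace Z] {μ : Measure X} {ν : Measure Y} {f : X → Z} {f' : Y → Z} {g' : Z → Y}
    (hf : Measurable f) (hf' : Measurable f') (hg' : Measurable g')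
    (hinv : Function.LeftInverse g' f') (h : μ.map f = ν.map f') :
    μ.map (fun x => g' (f x)) = ν := by
  rw [← Function.comp_def, ← Measure.map_map hg' hf, h, Measure.map_map hg' hf', hinv.id,
    Measure.map_id]

/-! ### C¹ diffeomorphisms -/

namespace IsC1Diffeo

variable {E F G : Type*} [NormedAddCommGroup E] [NormedSpace ℝ E] [NormedAddCommGroup F]
  [NormedSpace ℝ F] [NormedAddCommGroup G] [NormedSpace ℝ G] {φ : E → F}

lemma comp {g : F → G} {f : E → F} (hg : IsC1Diffeo g) (hf : IsC1Diffeo f) :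
    IsC1Diffeo fun x => g (f x) := by
  obtain ⟨hg, g', hg', hg'g, hgg'⟩ := hg
  obtain ⟨hf, f', hf', hf'f, hff'⟩ := hf
  exact ⟨hg.comp hf, f' ∘ g', hf'.comp hg', hg'g.comp hf'f, hgg'.comp hff'⟩

lemma isHomeomorph (hφ : IsC1Diffeo φ) : IsHomeomorph φ := by
  obtain ⟨hφ, ψ, hψ, hψφ, hφψ⟩ := hφ
  exact Homeomorph.isHomeomorph ⟨⟨φ, ψ, hψφ, hφψ⟩, hφ.continuous, hψ.continuous⟩

lemma measurableEmbedding [MeasurableSpace E] [BorelSpace E] [MeasurableSpace F] [BorelSpace F]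
    (hφ : IsC1Diffeo φ) : MeasurableEmbedding φ :=
  (hφ.isHomeomorph.homeomorph φ).measurableEmbedding

end IsC1Diffeo

lemma leftInverse_fderiv {𝕜 E F : Type*} [NontriviallyNormedField 𝕜] [NormedAddCommGroup E]
    [NormedSpace 𝕜 E] [NormedAddCommGroup F] [NormedSpace 𝕜 F] {φ : E → F} {ψ : F → E} {z : E}
    (hφ : DifferentiableAt 𝕜 φ z) (hψ : DifferentiableAt 𝕜 ψ (φ z))
    (h : Function.LeftInverse ψ φ) :
    Function.LeftInverse (fderiv 𝕜 ψ (φ z)) (fderiv 𝕜 φ z) := by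
  intro v
  rw [← ContinuousLinearMap.comp_apply, ← fderiv_comp z hψ hφ, h.id, fderiv_id,
    ContinuousLinearMap.id_apply]

lemma mem_of_leftInverse_of_invariant {K V : Type*} [DivisionRing K] [AddCommGroup V]
    [Module K V] {W : Submodule K V} [FiniteDimensional K W] {A B : V →ₗ[K] V}
    (h : Function.LeftInverse B A) (hA : ∀ v ∈ W, A v ∈ W) : ∀ v ∈ W, B v ∈ W := by
  intro v hv
  have hinj : Function.Injective (A.restrict hA) :=
    fun _ _ hab => Subtype.ext (h.injective (congrArg Subtype.val hab))
  obtain ⟨w, hw⟩ := LinearMap.injective_iff_surjective.1 hinj ⟨v, hv⟩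
  have hAw : A w = v := congrArg Subtype.val hw
  rw [← hAw, h]
  exact w.2

/-! ### Dependence on a block of coordinates -/

section Block

variable {d : ℕ} {τ : Finset (Fin d)}

/-- The directions in `ℝ^d` that leave the coordinates in `τ` unchanged. -/
def offBlock (τ : Finset (Fin d)) : Submodule ℝ (Fin d → ℝ) :=
  Submodule.pi (τ : Set (Fin d)) fun _ => ⊥

lemma mem_offBlock {v : Fin d → ℝ} : v ∈ offBlock τ ↔ ∀ i ∈ τ, v i = 0 := by
  simp only [offBlock, Submodule.mem_pi, Finset.mem_coe, Submodule.mem_bot]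

/-- The components of `φ` indexed by `τ` depend only on the coordinates in `τ`: the first half of
block-identifiability. -/
def PreservesBlock (φ : (Fin d → ℝ) → (Fin d → ℝ)) (τ : Finset (Fin d)) : Prop :=
  ∀ i ∈ τ, DependsOnlyOn (fun z => φ z i) τ

lemma dependsOnlyOn_iff_fderiv_eq_zero {E : Type*} [NormedAddCommGroup E] [NormedSpace ℝ E]
    {F : (Fin d → ℝ) → E} (hF : Differentiable ℝ F) :
    DependsOnlyOn F τ ↔ ∀ z, ∀ v ∈ offBlock τ, fderiv ℝ F z v = 0 := by
  refine ⟨fun hdep z v hv => ?_, fun hzero z w hzw => ?_⟩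
  · have hconst : (fun t : ℝ => F (z + t • v)) = fun _ => F z :=
      funext fun t => hdep _ _ fun i hi => by simp [mem_offBlock.1 hv i hi]
    rw [← (hF z).lineDeriv_eq_fderiv, lineDeriv, hconst, deriv_const]
  · have hv : w - z ∈ offBlock τ :=
      mem_offBlock.2 fun i hi => by simp only [Pi.sub_apply, hzw i hi, sub_self]
    have hderiv : ∀ t : ℝ, HasDerivAt (fun t => F (AffineMap.lineMap z w t)) 0 t := fun t => by
      rw [← hzero (AffineMap.lineMap z w t) _ hv]
      exact (hF _).hasFDerivAt.comp_hasDerivAt t AffineMap.hasDerivAt_lineMap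
    simpa only [AffineMap.lineMap_apply_zero, AffineMap.lineMap_apply_one] using
      is_const_of_deriv_eq_zero (fun t => (hderiv t).differentiableAt)
        (fun t => (hderiv t).deriv) 0 1

lemma preservesBlock_iff_fderiv_mem_offBlock {φ : (Fin d → ℝ) → (Fin d → ℝ)}
    (hφ : Differentiable ℝ φ) :
    PreservesBlock φ τ ↔ ∀ z, ∀ v ∈ offBlock τ, fderiv ℝ φ z v ∈ offBlock τ := by
  have hcomp : ∀ i, DependsOnlyOn (fun z => φ z i) τ ↔
      ∀ z, ∀ v ∈ offBlock τ, fderiv ℝ φ z v i = 0 := fun i => by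
    simp only [dependsOnlyOn_iff_fderiv_eq_zero (differentiable_pi.1 hφ i),
      fderiv_apply (hφ _) i, ContinuousLinearMap.comp_apply, ContinuousLinearMap.proj_apply]
  simp only [PreservesBlock, hcomp, mem_offBlock]
  tauto

-- An invertible Jacobian that is block triangular has a block triangular inverse.
lemma PreservesBlock.of_leftInverse {φ ψ : (Fin d → ℝ) → (Fin d → ℝ)} (hφ : Differentiable ℝ φ)
    (hψ : Differentiable ℝ ψ) (hψφ : Function.LeftInverse ψ φ)
    (hφψ : Function.RightInverse ψ φ) (h : PreservesBlock φ τ) : PreservesBlock ψ τ := by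
  rw [preservesBlock_iff_fderiv_mem_offBlock hφ] at h
  rw [preservesBlock_iff_fderiv_mem_offBlock hψ]
  intro z
  have hinv := leftInverse_fderiv (hφ (ψ z)) (hψ _) hψφ
  rw [hφψ z] at hinv
  exact mem_of_leftInverse_of_invariant (A := (fderiv ℝ φ (ψ z)).toLinearMap)
    (B := (fderiv ℝ ψ z).toLinearMap) hinv (h (ψ z))

lemma contDiff_fillBlock (τ : Finset (Fin d)) : ContDiff ℝ 1 (fillBlock τ) := by
  refine contDiff_pi.2 fun j => ?_
  by_cases hj : j ∈ τ
  · simpa only [fillBlock, hj, dite_true] using contDiff_apply ℝ ℝ _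
  · simpa only [fillBlock, hj, dite_false] using contDiff_const

lemma fillBlock_apply (y : {x // x ∈ τ} → ℝ) (i : {x // x ∈ τ}) : fillBlock τ y i = y i :=
  dif_pos i.2

lemma contDiff_blockMap {φ : (Fin d → ℝ) → (Fin d → ℝ)} (hφ : ContDiff ℝ 1 φ)
    (τ : Finset (Fin d)) : ContDiff ℝ 1 (blockMap φ τ) :=
  contDiff_pi.2 fun i => contDiff_pi.1 (hφ.comp (contDiff_fillBlock τ)) i

lemma PreservesBlock.leftInverse_blockMap {φ ψ : (Fin d → ℝ) → (Fin d → ℝ)}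
    (hψ : PreservesBlock ψ τ) (h : Function.LeftInverse ψ φ) :
    Function.LeftInverse (blockMap ψ τ) (blockMap φ τ) := by
  intro y
  funext i
  have hfill : ∀ k ∈ τ, fillBlock τ (blockMap φ τ y) k = φ (fillBlock τ y) k :=
    fun k hk => fillBlock_apply _ ⟨k, hk⟩
  calc
    ψ (fillBlock τ (blockMap φ τ y)) i = ψ (φ (fillBlock τ y)) i := hψ i i.2 _ _ hfill
    _ = y i := by rw [h, fillBlock_apply]

lemma PreservesBlock.isC1Diffeo_blockMap {φ : (Fin d → ℝ) → (Fin d → ℝ)}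
    (h : PreservesBlock φ τ) (hφ : IsC1Diffeo φ) : IsC1Diffeo (blockMap φ τ) := by
  obtain ⟨hφ, ψ, hψ, hψφ, hφψ⟩ := hφ
  have hψτ : PreservesBlock ψ τ := h.of_leftInverse (hφ.differentiable one_ne_zero)
    (hψ.differentiable one_ne_zero) hψφ hφψ
  exact ⟨contDiff_blockMap hφ τ, blockMap ψ τ, contDiff_blockMap hψ τ,
    hψτ.leftInverse_blockMap hψφ, h.leftInverse_blockMap hφψ⟩

lemma DependsOnlyOn.fderiv_apply_eq_sum {h : (Fin d → ℝ) → ℝ} (hdep : DependsOnlyOn h τ)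
    (hh : Differentiable ℝ h) (z v : Fin d → ℝ) :
    fderiv ℝ h z v =
      ∑ j : Fin τ.card, fderiv ℝ h z (Pi.single (coordOf τ j) 1) * v (coordOf τ j) := by
  have hoff : ∀ i ∉ τ, fderiv ℝ h z (Pi.single i 1) = 0 := fun i hi =>
    (dependsOnlyOn_iff_fderiv_eq_zero hh).1 hdep z _ <| mem_offBlock.2 fun k hk =>
      Pi.single_eq_of_ne (ne_of_mem_of_not_mem hk hi) 1
  calc
    fderiv ℝ h z v = ∑ i, fderiv ℝ h z (Pi.single i 1) * v i := by
      conv_lhs => rw [pi_eq_sum_univ' v]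
      simp only [map_sum, map_smul, smul_eq_mul, mul_comm]
    _ = ∑ i ∈ τ, fderiv ℝ h z (Pi.single i 1) * v i :=
      (Finset.sum_subset (Finset.subset_univ τ) fun i _ hi => by rw [hoff i hi, zero_mul]).symm
    _ = ∑ i : τ, fderiv ℝ h z (Pi.single (i : Fin d) 1) * v i :=
      (Finset.sum_coe_sort τ fun i => fderiv ℝ h z (Pi.single i 1) * v i).symm
    _ = _ := (Equiv.sum_comp τ.equivFin.symm
      fun i : τ => fderiv ℝ h z (Pi.single (i : Fin d) 1) * v i).symm

lemma mem_offBlock_of_linearIndependent {h : Fin τ.card → (Fin d → ℝ) → ℝ}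
    (hdep : ∀ s, DependsOnlyOn (h s) τ) (hh : ∀ s, Differentiable ℝ (h s)) {z v : Fin d → ℝ}
    (hind : LinearIndependent ℝ fun s j : Fin τ.card =>
      fderiv ℝ (h s) z (Pi.single (coordOf τ j) 1))
    (hv : ∀ s, fderiv ℝ (h s) z v = 0) : v ∈ offBlock τ := by
  let A : Matrix (Fin τ.card) (Fin τ.card) ℝ :=
    .of fun s j => fderiv ℝ (h s) z (Pi.single (coordOf τ j) 1)
  have hinj : Function.Injective A.mulVec :=
    Matrix.mulVec_injective_iff_isUnit.2 (Matrix.linearIndependent_rows_iff_isUnit.1 hind)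
  have hker : A.mulVec (fun j => v (coordOf τ j)) = A.mulVec 0 := by
    rw [Matrix.mulVec_zero]
    funext s
    exact ((hdep s).fderiv_apply_eq_sum (hh s) z v).symm.trans (hv s)
  refine mem_offBlock.2 fun i hi => ?_
  have hi' : coordOf τ (τ.equivFin ⟨i, hi⟩) = i := by
    rw [coordOf, Equiv.symm_apply_apply]
  simpa only [hi', Pi.zero_apply] using congrFun (hinj hker) (τ.equivFin ⟨i, hi⟩)

lemma preservesBlock_of_eq_comp {ι : Type*} {φ : (Fin d → ℝ) → (Fin d → ℝ)}
    (hφ : ContDiff ℝ 1 φ) (hφo : IsOpenMap φ) {h h' : ι → (Fin d → ℝ) → ℝ}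
    (hdep : ∀ s, DependsOnlyOn (h s) τ) (hh : ∀ s, Differentiable ℝ (h s))
    (hh' : ∀ s, Differentiable ℝ (h' s)) (heq : ∀ s z, h s z = h' s (φ z))
    (hdense : Dense {z | ∀ v, (∀ s, fderiv ℝ (h' s) z v = 0) → v ∈ offBlock τ}) :
    PreservesBlock φ τ := by
  have hφd : Differentiable ℝ φ := hφ.differentiable one_ne_zero
  refine (preservesBlock_iff_fderiv_mem_offBlock hφd).2 fun z v hv => ?_
  have hclosed : IsClosed {z | fderiv ℝ φ z v ∈ offBlock τ} :=
    (offBlock τ).closed_of_finiteDimensional.preimage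
      ((hφ.continuous_fderiv one_ne_zero).clm_apply continuous_const)
  refine hclosed.closure_subset_iff.2 (fun w hw => ?_) (hdense.preimage hφo z)
  refine hw _ fun s => ?_
  calc
    fderiv ℝ (h' s) (φ w) (fderiv ℝ φ w v) = fderiv ℝ (h s) w v := by
      rw [funext (heq s), fderiv_fun_comp w (hh' s _) (hφd w), ContinuousLinearMap.comp_apply]
    _ = 0 := (dependsOnlyOn_iff_fderiv_eq_zero (hh s)).1 (hdep s) w v hv

/-! ### Block factors and the discrepancy -/

/-- A strictly positive C¹ function of the block `τ` alone, not necessarily normalised. Both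
the intervened block densities and the mechanism of a block closed under parents are of this
kind. -/
structure IsBlockFactor (τ : Finset (Fin d)) (r : (Fin d → ℝ) → ℝ) : Prop where
  pos : ∀ z, 0 < r z
  contDiff : ContDiff ℝ 1 r
  dependsOnlyOn : DependsOnlyOn r τ

lemma IsBlockDensity.isBlockFactor {r : (Fin d → ℝ) → ℝ} (hr : IsBlockDensity τ r) :
    IsBlockFactor τ r :=
  ⟨hr.1, hr.2.1, hr.2.2.1⟩

lemma IsCondFamily.isBlockFactor_blockMech {pa : Fin d → Finset (Fin d)}
    {p : Fin d → (Fin d → ℝ) → ℝ} (hp : IsCondFamily pa p) (hτ : ∀ i ∈ τ, pa i ⊆ τ) :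
    IsBlockFactor τ (blockMech p τ) where
  pos z := Finset.prod_pos fun i _ => (hp i).1 z
  contDiff := contDiff_prod fun i _ => (hp i).2.1
  dependsOnlyOn z w hzw := Finset.prod_congr rfl fun i hi => (hp i).2.2.1 z w fun k hk =>
    hzw k (Finset.insert_subset hi (hτ i hi) hk)

lemma IsCondFamily.isContPos_prod {pa : Fin d → Finset (Fin d)} {p : Fin d → (Fin d → ℝ) → ℝ}
    (hp : IsCondFamily pa p) (S : Finset (Fin d)) : IsContPos fun z => ∏ i ∈ S, p i z :=
  .prod fun i _ => ⟨(hp i).2.1.continuous, (hp i).1⟩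

lemma blockMech_mul_prod_compl (p : Fin d → (Fin d → ℝ) → ℝ) (τ : Finset (Fin d))
    (z : Fin d → ℝ) : blockMech p τ z * ∏ i ∈ τᶜ, p i z = jointDensity p z :=
  Finset.prod_mul_prod_compl τ fun i => p i z

/-- The log-density difference `log r − log r₀` whose partial derivatives are the entries of the
discrepancy matrix. -/
def logRatio (r r₀ : (Fin d → ℝ) → ℝ) : (Fin d → ℝ) → ℝ :=
  fun z => Real.log (r z) - Real.log (r₀ z)

/-- The block-interventional discrepancy of the regimes `r s` relative to `r₀` at the point `z`.
Invertibility of the square matrix of partial derivatives is expressed by independence of its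
rows. -/
def BlockDiscrepancy (τ : Finset (Fin d)) (r : Fin τ.card → (Fin d → ℝ) → ℝ)
    (r₀ : (Fin d → ℝ) → ℝ) (z : Fin d → ℝ) : Prop :=
  LinearIndependent ℝ fun s j : Fin τ.card =>
    fderiv ℝ (logRatio (r s) r₀) z (Pi.single (coordOf τ j) 1)

namespace IsBlockFactor

variable {r r₀ : (Fin d → ℝ) → ℝ}

lemma isContPos (hr : IsBlockFactor τ r) : IsContPos r :=
  ⟨hr.contDiff.continuous, hr.pos⟩

lemma differentiable_logRatio (hr : IsBlockFactor τ r) (hr₀ : IsBlockFactor τ r₀) :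
    Differentiable ℝ (logRatio r r₀) :=
  ((hr.contDiff.differentiable one_ne_zero).log fun z => (hr.pos z).ne').sub
    ((hr₀.contDiff.differentiable one_ne_zero).log fun z => (hr₀.pos z).ne')

lemma dependsOnlyOn_logRatio (hr : IsBlockFactor τ r) (hr₀ : IsBlockFactor τ r₀) :
    DependsOnlyOn (logRatio r r₀) τ := fun z w hzw => by
  simp only [logRatio, hr.dependsOnlyOn z w hzw, hr₀.dependsOnlyOn z w hzw]

end IsBlockFactor

lemma logRatio_eq_comp_of_map_eq {φ : (Fin d → ℝ) → (Fin d → ℝ)} (hφ : Continuous φ)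
    (hφm : MeasurableEmbedding φ) {r r₀ r' r₀' P Q : (Fin d → ℝ) → ℝ} (hr : IsContPos r)
    (hr₀ : IsContPos r₀) (hr' : IsContPos r') (hr₀' : IsContPos r₀') (hP : IsContPos P)
    (hQ : IsContPos Q)
    (h₀ : (densityMeasure fun z => r₀ z * P z).map φ = densityMeasure fun z => r₀' z * Q z)
    (h : (densityMeasure fun z => r z * P z).map φ = densityMeasure fun z => r' z * Q z)
    (z : Fin d → ℝ) : logRatio r r₀ z = logRatio r' r₀' (φ z) := by
  have hdiv := div_eq_div_comp_of_map_withDensity_eq hφ hφm (hr₀.mul hP) (hr.mul hP)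
    (hr₀'.mul hQ) (hr'.mul hQ) h₀ h z
  rw [mul_div_mul_right _ _ (hP.pos z).ne', mul_div_mul_right _ _ (hQ.pos (φ z)).ne'] at hdiv
  rw [logRatio, logRatio, ← Real.log_div (hr.pos z).ne' (hr₀.pos z).ne',
    ← Real.log_div (hr'.pos _).ne' (hr₀'.pos _).ne', hdiv]

lemma preservesBlock_of_dense_blockDiscrepancy {φ : (Fin d → ℝ) → (Fin d → ℝ)}
    (hφ : IsC1Diffeo φ) {r r' : Fin τ.card → (Fin d → ℝ) → ℝ} {r₀ r₀' : (Fin d → ℝ) → ℝ}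
    (hr : ∀ s, IsBlockFactor τ (r s)) (hr' : ∀ s, IsBlockFactor τ (r' s))
    (hr₀ : IsBlockFactor τ r₀) (hr₀' : IsBlockFactor τ r₀')
    (heq : ∀ s z, logRatio (r s) r₀ z = logRatio (r' s) r₀' (φ z))
    (hdisc : Dense {z | BlockDiscrepancy τ r' r₀' z}) : PreservesBlock φ τ :=
  preservesBlock_of_eq_comp hφ.1 hφ.isHomeomorph.isOpenMap
    (fun s => (hr s).dependsOnlyOn_logRatio hr₀) (fun s => (hr s).differentiable_logRatio hr₀)
    (fun s => (hr' s).differentiable_logRatio hr₀') heq <| hdisc.mono fun _ hz _ =>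
      mem_offBlock_of_linearIndependent (fun s => (hr' s).dependsOnlyOn_logRatio hr₀')
        (fun s => (hr' s).differentiable_logRatio hr₀') hz

lemma preservesBlock_of_dense_blockDiscrepancy_or {φ : (Fin d → ℝ) → (Fin d → ℝ)}
    (hφ : IsC1Diffeo φ) {r r' : Fin τ.card → (Fin d → ℝ) → ℝ} {r₀ r₀' : (Fin d → ℝ) → ℝ}
    (hr : ∀ s, IsBlockFactor τ (r s)) (hr' : ∀ s, IsBlockFactor τ (r' s))
    (hr₀ : IsBlockFactor τ r₀) (hr₀' : IsBlockFactor τ r₀')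
    (heq : ∀ s z, logRatio (r s) r₀ z = logRatio (r' s) r₀' (φ z))
    (hdisc : Dense {z | BlockDiscrepancy τ r r₀ z} ∨ Dense {z | BlockDiscrepancy τ r' r₀' z}) :
    PreservesBlock φ τ := by
  rcases hdisc with hdisc | hdisc
  · obtain ⟨hφ, ψ, hψ, hψφ, hφψ⟩ := hφ
    have hψτ : PreservesBlock ψ τ :=
      preservesBlock_of_dense_blockDiscrepancy ⟨hψ, φ, hφ, hφψ, hψφ⟩ hr' hr hr₀' hr₀
        (fun s z => by rw [heq, hφψ]) hdisc
    exact hψτ.of_leftInverse (hψ.differentiable one_ne_zero) (hφ.differentiable one_ne_zero)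
      hφψ hψφ
  · exact preservesBlock_of_dense_blockDiscrepancy hφ hr hr' hr₀ hr₀' heq hdisc

lemma isBlockFactor_base_and_map_eq {pa : Fin d → Finset (Fin d)}
    {p q : Fin d → (Fin d → ℝ) → ℝ} (hp : IsCondFamily pa p) (hq : IsCondFamily pa q)
    {f f' : (Fin d → ℝ) → (Fin d → ℝ)} {r₀ r₀' : (Fin d → ℝ) → ℝ}
    (hmatch₀ : (densityMeasure (jointDensity p)).map f = (densityMeasure (jointDensity q)).map f')
    (hbase : (∀ i ∈ τ, pa i ⊆ τ) → r₀ = blockMech p τ ∧ r₀' = blockMech q τ)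
    (hbase' : ¬(∀ i ∈ τ, pa i ⊆ τ) →
      IsBlockDensity τ r₀ ∧ IsBlockDensity τ r₀' ∧
        (densityMeasure fun z => r₀ z * ∏ i ∈ τᶜ, p i z).map f =
          (densityMeasure fun z => r₀' z * ∏ i ∈ τᶜ, q i z).map f') :
    IsBlockFactor τ r₀ ∧ IsBlockFactor τ r₀' ∧
      (densityMeasure fun z => r₀ z * ∏ i ∈ τᶜ, p i z).map f =
        (densityMeasure fun z => r₀' z * ∏ i ∈ τᶜ, q i z).map f' := by
  by_cases hclosed : ∀ i ∈ τ, pa i ⊆ τ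
  · obtain ⟨rfl, rfl⟩ := hbase hclosed
    exact ⟨hp.isBlockFactor_blockMech hclosed, hq.isBlockFactor_blockMech hclosed,
      by simpa only [blockMech_mul_prod_compl] using hmatch₀⟩
  · obtain ⟨hr₀, hr₀', hmap₀⟩ := hbase' hclosed
    exact ⟨hr₀.isBlockFactor, hr₀'.isBlockFactor, hmap₀⟩

end Block

/-- `P` and `Q` stand for the products of the mechanisms outside the block. -/
theorem cauca_fat_hand_block_identifiability_general {d : ℕ} {τ : Finset (Fin d)}
    {f f' g' : (Fin d → ℝ) → (Fin d → ℝ)} (hf : IsC1Diffeo f) (hf' : ContDiff ℝ 1 f')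
    (hg' : ContDiff ℝ 1 g') (hinv₁ : Function.LeftInverse g' f')
    (hinv₂ : Function.RightInverse g' f') {P Q : (Fin d → ℝ) → ℝ} (hP : IsContPos P)
    (hQ : IsContPos Q) {r r' : Fin τ.card → (Fin d → ℝ) → ℝ} {r₀ r₀' : (Fin d → ℝ) → ℝ}
    (hr : ∀ s, IsBlockFactor τ (r s)) (hr' : ∀ s, IsBlockFactor τ (r' s))
    (hr₀ : IsBlockFactor τ r₀) (hr₀' : IsBlockFactor τ r₀')
    (hdisc : Dense {z | BlockDiscrepancy τ r r₀ z} ∨ Dense {z | BlockDiscrepancy τ r' r₀' z})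
    (hmatch₀ : (densityMeasure fun z => r₀ z * P z).map f =
      (densityMeasure fun z => r₀' z * Q z).map f')
    (hmatch : ∀ s, (densityMeasure fun z => r s z * P z).map f =
      (densityMeasure fun z => r' s z * Q z).map f') :
    PreservesBlock (fun z => g' (f z)) τ ∧ IsC1Diffeo (blockMap (fun z => g' (f z)) τ) := by
  have hφ : IsC1Diffeo fun z => g' (f z) := IsC1Diffeo.comp ⟨hg', f', hf', hinv₂, hinv₁⟩ hf
  have hpull {μ ν : Measure (Fin d → ℝ)} (h : μ.map f = ν.map f') :
      μ.map (fun z => g' (f z)) = ν :=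
    map_comp_eq_of_map_eq_map hf.1.continuous.measurable hf'.continuous.measurable
      hg'.continuous.measurable hinv₁ h
  have heq (s : Fin τ.card) (z : Fin d → ℝ) :
      logRatio (r s) r₀ z = logRatio (r' s) r₀' (g' (f z)) :=
    logRatio_eq_comp_of_map_eq hφ.1.continuous hφ.measurableEmbedding (hr s).isContPos
      hr₀.isContPos (hr' s).isContPos hr₀'.isContPos hP hQ (hpull hmatch₀) (hpull (hmatch s)) z
  have hτ : PreservesBlock (fun z => g' (f z)) τ :=
    preservesBlock_of_dense_blockDiscrepancy_or hφ hr hr' hr₀ hr₀' heq hdisc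
  exact ⟨hτ, hτ.isC1Diffeo_blockMap hφ⟩

/-- **Theorem (fat-hand interventions: block identifiability).** Two models over the same
DAG, with perfect fat-hand interventions whose target sets `τ ∈ T` are strict subsets of the
nodes and cover all nodes. For each `τ ∈ T` there are `|τ|` interventional regimes with
intervened block densities `r τ s` (resp. `r' τ s`), plus a base block density `r0 τ`
(resp. `r0' τ`) which is the observational block mechanism if `τ` has no parents outside `τ`,
and an additional (matched) perfect fat-hand intervention otherwise. Assuming the
block-interventional discrepancy — almost everywhere, the `|τ| × |τ|` matrix of partial
log-density differences is invertible (phrased as linear independence of its rows) — for each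
`τ` in both models, and matching pushforwards `f⁎P = f′⁎Q` in the unintervened regime and all
interventional regimes, the map `φ := f′⁻¹ ∘ f` is block-identifiable: for each `τ ∈ T`, the
components of `φ` indexed by `τ` depend only on the coordinates `z_τ`, and the induced block
map `ℝ^{|τ|} → ℝ^{|τ|}` is a diffeomorphism. -/
theorem cauca_fat_hand_block_identifiability {d : ℕ}
    (pa : Fin d → Finset (Fin d))
    (hpa : ∀ i : Fin d, ∀ j ∈ pa i, j < i)
    (p q : Fin d → (Fin d → ℝ) → ℝ)
    (hp : IsCondFamily pa p) (hq : IsCondFamily pa q)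
    (T : Finset (Finset (Fin d)))
    (hcover : ∀ i : Fin d, ∃ τ ∈ T, i ∈ τ)
    (hstrict : ∀ τ ∈ T, τ ≠ Finset.univ)
    (f f' g' : (Fin d → ℝ) → (Fin d → ℝ))
    (hf : IsC1Diffeo f) (hf' : ContDiff ℝ 1 f') (hg' : ContDiff ℝ 1 g')
    (hinv₁ : Function.LeftInverse g' f') (hinv₂ : Function.RightInverse g' f')
    (r r' : (τ : Finset (Fin d)) → Fin τ.card → (Fin d → ℝ) → ℝ)
    (r0 r0' : (τ : Finset (Fin d)) → (Fin d → ℝ) → ℝ)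
    (hr : ∀ τ ∈ T, ∀ s : Fin τ.card, IsBlockDensity τ (r τ s))
    (hr' : ∀ τ ∈ T, ∀ s : Fin τ.card, IsBlockDensity τ (r' τ s))
    (hbase : ∀ τ ∈ T, (∀ i ∈ τ, pa i ⊆ τ) →
        r0 τ = blockMech p τ ∧ r0' τ = blockMech q τ)
    (hbase' : ∀ τ ∈ T, ¬(∀ i ∈ τ, pa i ⊆ τ) →
        IsBlockDensity τ (r0 τ) ∧ IsBlockDensity τ (r0' τ) ∧
        Measure.map f (densityMeasure fun z => r0 τ z * ∏ i ∈ τᶜ, p i z) =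
          Measure.map f' (densityMeasure fun z => r0' τ z * ∏ i ∈ τᶜ, q i z))
    (hdiscp : ∀ τ ∈ T, ∀ᵐ (z : Fin d → ℝ) ∂volume,
        LinearIndependent ℝ (fun s : Fin τ.card => fun j : Fin τ.card =>
          fderiv ℝ (fun w => Real.log (r τ s w) - Real.log (r0 τ w)) z
            (Pi.single (coordOf τ j) 1)))
    (hdiscq : ∀ τ ∈ T, ∀ᵐ (z : Fin d → ℝ) ∂volume,
        LinearIndependent ℝ (fun s : Fin τ.card => fun j : Fin τ.card =>
          fderiv ℝ (fun w => Real.log (r' τ s w) - Real.log (r0' τ w)) z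
            (Pi.single (coordOf τ j) 1)))
    (hmatch0 : Measure.map f (densityMeasure (jointDensity p)) =
        Measure.map f' (densityMeasure (jointDensity q)))
    (hmatch : ∀ τ ∈ T, ∀ s : Fin τ.card,
        Measure.map f (densityMeasure fun z => r τ s z * ∏ i ∈ τᶜ, p i z) =
        Measure.map f' (densityMeasure fun z => r' τ s z * ∏ i ∈ τᶜ, q i z)) :
    ∀ τ ∈ T,
      (∀ i ∈ τ, DependsOnlyOn (fun z => g' (f z) i) τ) ∧
      IsC1Diffeo (blockMap (fun z => g' (f z)) τ) := by
  intro τ hτ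
  obtain ⟨hr0, hr0', hmap0⟩ :=
    isBlockFactor_base_and_map_eq hp hq hmatch0 (hbase τ hτ) (hbase' τ hτ)
  exact cauca_fat_hand_block_identifiability_general hf hf' hg' hinv₁ hinv₂
    (hp.isContPos_prod τᶜ) (hq.isContPos_prod τᶜ) (fun s => (hr τ hτ s).isBlockFactor)
    (fun s => (hr' τ hτ s).isBlockFactor) hr0 hr0' (.inr (Measure.dense_of_ae (hdiscq τ hτ)))
    hmap0 (hmatch τ hτ)
end
end

section
/- Let d ≥ 1. In the nonlinear ICA setting with single-node interventions on the first d−1 variables, let two models be given: strictly positive C¹ densities (p_i)_{i∈[d]} and (p̃_k)_{k∈[d−1]} on ℝ with joints p^0(z) = ∏_{i=1}^d p_i(z_i) and p^k(z) = p̃_k(z_k)∏_{i≠k}p_i(z_i) for k ∈ [d−1], and likewise (q_i), (q̃_k) with joints q^0, q^k. Assume for every k ∈ [d−1] the interventional discrepancy (log p_k)′(x) ≠ (log p̃_k)′(x) for Lebesgue-a.e. x ∈ ℝ, and likewise (log q_k)′ ≠ (log q̃_k)′ a.e. If f, f′ : ℝ^d → ℝ^d are C¹ diffeomorphisms with f_*P^k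 = f′_*Q^k for all k ∈ {0,1,…,d−1}, then f′⁻¹∘f ∈ S_scaling. -/
open MeasureTheory

noncomputable section

/-!
Write `φ = f'⁻¹ ∘ f`, `ρ k = pt k / p k` and `σ k = qt k / q k`. The map `φ` carries `P⁰` to `Q⁰`
and `Pᵏ = ρ k (z k) P⁰` to `Qᵏ = σ k (z k) Q⁰`, so `σ k (φ z k) = ρ k (z k)`, everywhere by
continuity. On a slice where `z k` is fixed, `φ · k` therefore takes values in one fibre of `σ k`.
The slice is connected and, by the discrepancy, the fibre is totally disconnected, so `φ · k`
depends on `z k` only.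

For the coordinate `l` without intervention, view `φ` as a map `ℝ × Y → ℝ × Z` over a homeomorphism
`Y ≃ₜ Z` of the other coordinates. By Fubini almost every fibre map `ℝ → ℝ` pushes `p l` to `q l`.
Being strictly monotone or antitone, it sends a given `t` to a point whose lower or upper `q l`-mass
is the `p l`-mass of `Iic t`. This leaves finitely many values, and the image of `t` depends
continuously on the connected base, hence is constant.
-/

section

open Set Function
open scoped ENNReal

section FiberedMaps

lemma ae_measure_fiber_preimage_eq {X X' Y Z : Type*} [MeasurableSpace X] [MeasurableSpace X']
    [MeasurableSpace Y] [MeasurableSpace Z] {μ : Measure X} {ν : Measure X'} {π : Measure Y}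
    {κ : Measure Z} [IsProbabilityMeasure μ] [IsProbabilityMeasure ν] [SigmaFinite π] [SFinite κ]
    {Φ : X × Y → X' × Z} (hΦ : MeasurePreserving Φ (μ.prod π) (ν.prod κ)) (h : Y ≃ᵐ Z)
    (hΦh : ∀ x, (Φ x).2 = h x.2) {S : Set X'} (hS : MeasurableSet S) :
    ∀ᵐ y ∂π, μ ((fun t => (Φ (t, y)).1) ⁻¹' S) = ν S := by
  have measurable_fiber {S : Set X'} (hS : MeasurableSet S) :
      MeasurableSet (Φ ⁻¹' (S ×ˢ univ)) :=
    hΦ.measurable (hS.prod MeasurableSet.univ)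
  have setLIntegral_fiber {S : Set X'} (hS : MeasurableSet S) {A : Set Y} (hA : MeasurableSet A) :
      ∫⁻ y in A, μ ((fun t => (t, y)) ⁻¹' (Φ ⁻¹' (S ×ˢ univ))) ∂π = ν S * κ (h.symm ⁻¹' A) :=
    calc
      _ = (μ.prod π) (Φ ⁻¹' (S ×ˢ univ) ∩ univ ×ˢ A) := by
        rw [← Measure.prod_apply_symm (measurable_fiber hS), ← Measure.restrict_univ (μ := μ),
          Measure.prod_restrict, Measure.restrict_apply (measurable_fiber hS),
          Measure.restrict_univ]
      _ = (μ.prod π) (Φ ⁻¹' (S ×ˢ (h.symm ⁻¹' A))) := by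
        congr 1
        ext x
        simp [hΦh]
      _ = ν S * κ (h.symm ⁻¹' A) := by
        rw [hΦ.measure_preimage (hS.prod (h.symm.measurable hA)).nullMeasurableSet,
          Measure.prod_prod]
  have measure_base {A : Set Y} (hA : MeasurableSet A) : κ (h.symm ⁻¹' A) = π A := by
    simpa using (setLIntegral_fiber MeasurableSet.univ hA).symm
  have fiber_ae_eq : (fun y => μ ((fun t => (t, y)) ⁻¹' (Φ ⁻¹' (S ×ˢ univ)))) =ᵐ[π] fun _ => ν S :=
    ae_eq_of_forall_setLIntegral_eq_of_sigmaFinite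
      (measurable_measure_prodMk_right (measurable_fiber hS)) measurable_const fun A hA _ => by
        rw [setLIntegral_fiber hS hA, measure_base hA, setLIntegral_const]
  filter_upwards [fiber_ae_eq] with y hy
  rw [← hy]
  congr 1
  ext t
  simp

lemma measure_lt_measure_of_interior_diff_nonempty {X : Type*} [TopologicalSpace X]
    [MeasurableSpace X] {μ : Measure X} [μ.IsOpenPosMeasure] {s t : Set X} (hst : s ⊆ t)
    (hs : NullMeasurableSet s μ) (hμs : μ s ≠ ∞) (hne : (interior (t \ s)).Nonempty) :
    μ s < μ t := by
  calc
    μ s < μ s + μ (t \ s) :=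
      ENNReal.lt_add_right hμs (Measure.measure_pos_of_nonempty_interior μ hne).ne'
    _ = μ t := by rw [measure_add_sdiff hs t, union_eq_self_of_subset_left hst]

section LinearOrder

variable {α : Type*} [LinearOrder α] [DenselyOrdered α] [TopologicalSpace α] [OrderTopology α]
  [MeasurableSpace α] [OpensMeasurableSpace α] (μ : Measure α) [IsFiniteMeasure μ]
  [μ.IsOpenPosMeasure]

lemma strictMono_measure_Iic : StrictMono fun t => μ (Iic t) := fun s t hst => by
  refine measure_lt_measure_of_interior_diff_nonempty (Iic_subset_Iic.2 hst.le)
    measurableSet_Iic.nullMeasurableSet (measure_ne_top μ _) ((nonempty_Ioo.2 hst).mono ?_)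
  exact interior_maximal (fun x hx => ⟨hx.2.le, not_le.2 hx.1⟩) isOpen_Ioo

lemma strictAnti_measure_Ici : StrictAnti fun t => μ (Ici t) := fun s t hst => by
  refine measure_lt_measure_of_interior_diff_nonempty (Ici_subset_Ici.2 hst.le)
    measurableSet_Ici.nullMeasurableSet (measure_ne_top μ _) ((nonempty_Ioo.2 hst).mono ?_)
  exact interior_maximal (fun x hx => ⟨hx.1.le, not_le.2 hx.2⟩) isOpen_Ioo

lemma finite_setOf_measure_Iic_eq_or_measure_Ici_eq (a : ℝ≥0∞) :
    {t | μ (Iic t) = a ∨ μ (Ici t) = a}.Finite :=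
  (subsingleton_singleton.preimage (strictMono_measure_Iic μ).injective).finite.union
    (subsingleton_singleton.preimage (strictAnti_measure_Ici μ).injective).finite

end LinearOrder

lemma preimage_Iic_eq_Iic_or_Ici {α β : Type*} [ConditionallyCompleteLinearOrder α]
    [DenselyOrdered α] [TopologicalSpace α] [OrderTopology α] [LinearOrder β] [TopologicalSpace β]
    [OrderClosedTopology β] {c : α → β} (hc : Continuous c) (hinj : Injective c) (t : α) :
    c ⁻¹' Iic (c t) = Iic t ∨ c ⁻¹' Iic (c t) = Ici t :=
  (hc.strictMono_of_inj hinj).imp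
    (fun hmono => Set.ext fun _ => hmono.le_iff_le) fun hanti => Set.ext fun _ => hanti.le_iff_ge

lemma eq_of_ae_mem_finite {Y Z : Type*} [TopologicalSpace Y] [PreconnectedSpace Y]
    [MeasurableSpace Y] {π : Measure Y} [π.IsOpenPosMeasure] [TopologicalSpace Z] [T1Space Z]
    {τ : Y → Z} (hτ : Continuous τ) {K : Set Z} (hK : K.Finite) (hτK : ∀ᵐ y ∂π, τ y ∈ K)
    (y y' : Y) : τ y = τ y' := by
  have mem_K (y : Y) : τ y ∈ K :=
    (hK.isClosed.preimage hτ).closure_subset_iff.2 subset_rfl (Measure.dense_of_ae hτK y)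
  exact isPreconnected_univ.constant_of_mapsTo hK.isDiscrete hτ.continuousOn
    (fun y _ => mem_K y) (mem_univ y) (mem_univ y')

lemma factorsThrough_fst_of_measurePreserving {α β Y Z : Type*}
    [LinearOrder α] [TopologicalSpace α] [OrderClosedTopology α] [MeasurableSpace α] [BorelSpace α]
    [ConditionallyCompleteLinearOrder β] [DenselyOrdered β] [TopologicalSpace β] [OrderTopology β]
    [MeasurableSpace β] [BorelSpace β]
    [TopologicalSpace Y] [SecondCountableTopology Y] [MeasurableSpace Y] [BorelSpace Y]
    [TopologicalSpace Z] [SecondCountableTopology Z] [PreconnectedSpace Z] [MeasurableSpace Z]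
    [BorelSpace Z]
    {μ : Measure α} {ν : Measure β} {π : Measure Y} {κ : Measure Z} [IsProbabilityMeasure μ]
    [IsProbabilityMeasure ν] [SFinite π] [SigmaFinite κ] [ν.IsOpenPosMeasure] [κ.IsOpenPosMeasure]
    (Φ : α × Y ≃ₜ β × Z) (hΦ : MeasurePreserving Φ (μ.prod π) (ν.prod κ)) (h : Y ≃ₜ Z)
    (hΦh : ∀ x, (Φ x).2 = h x.2) :
    (fun x => (Φ x).1).FactorsThrough Prod.fst := by
  have symm_snd (x : β × Z) : (Φ.symm x).2 = h.symm x.2 := by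
    rw [h.eq_symm_apply, ← hΦh, Φ.apply_symm_apply]
  rintro ⟨t, y⟩ ⟨_, y'⟩ rfl
  let τ : Z → β := fun z => (Φ (t, h.symm z)).1
  have hτ : Continuous τ := by fun_prop
  have symm_τ (z : Z) : Φ.symm (τ z, z) = (t, h.symm z) := by
    rw [Φ.symm_apply_eq]
    exact Prod.ext rfl (by simp [hΦh])
  have injective_fiber (z : Z) : Injective fun s => (Φ.symm (s, z)).1 := fun s s' hs =>
    congrArg Prod.fst (Φ.symm.injective (Prod.ext hs (by simp [symm_snd])))
  -- The fibre over `z` of `Φ⁻¹ (Iic t × Y)` is the half-line `Iic (τ z)` or `Ici (τ z)`.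
  have hτK : ∀ᵐ z ∂κ, τ z ∈ {s | ν (Iic s) = μ (Iic t) ∨ ν (Ici s) = μ (Iic t)} := by
    filter_upwards [ae_measure_fiber_preimage_eq
      (MeasurePreserving.symm Φ.toMeasurableEquiv hΦ) h.symm.toMeasurableEquiv symm_snd
      (measurableSet_Iic (a := t))] with z hz
    refine (preimage_Iic_eq_Iic_or_Ici (by fun_prop) (injective_fiber z) (τ z)).imp ?_ ?_ <;>
    · intro hpre
      rw [← hpre, ← hz]
      simp [symm_τ]
  simpa [τ] using eq_of_ae_mem_finite hτ
    (finite_setOf_measure_Iic_eq_or_measure_Ici_eq ν _) hτK (h y) (h y')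

end FiberedMaps

section Coordinates

lemma factorsThrough_eval_of_comp_eq {ι Y β : Type*} {X : ι → Type*} [∀ i, TopologicalSpace (X i)]
    [∀ i, PreconnectedSpace (X i)] [TopologicalSpace Y] {F : (∀ i, X i) → Y} (hF : Continuous F)
    {k : ι} {ρ : X k → β} {σ : Y → β} (hσ : ∀ c, IsTotallyDisconnected (σ ⁻¹' {c}))
    (h : ∀ z, σ (F z) = ρ (z k)) : F.FactorsThrough (eval k) := by
  classical
  intro z w hzw
  let G : (∀ i, X i) → Y := fun v => F (update v k (z k))
  have hG : IsPreconnected (range G) := isPreconnected_range (by fun_prop)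
  have range_subset : range G ⊆ σ ⁻¹' {ρ (z k)} := range_subset_iff.2 fun v => by simp [G, h]
  have hGz : G z = F z := by simp [G]
  have hGw : G w = F w := by simp only [G, show z k = w k from hzw, update_eq_self]
  rw [← hGz, ← hGw]
  exact hσ _ _ range_subset hG (mem_range_self z) (mem_range_self w)

variable {ι : Type*} {X Y : ι → Type*} [∀ i, TopologicalSpace (X i)] [∀ i, TopologicalSpace (Y i)]

lemma exists_homeomorph_of_factorsThrough_eval [∀ i, Nonempty (X i)] [∀ i, Nonempty (Y i)]
    (φ : (∀ i, X i) ≃ₜ ∀ i, Y i) {k : ι} (hφ : (fun z => φ z k).FactorsThrough (eval k))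
    (hφ' : (fun z => φ.symm z k).FactorsThrough (eval k)) :
    ∃ e : X k ≃ₜ Y k, ∀ z, φ z k = e (z k) := by
  classical
  let x : ∀ i, X i := fun i => Classical.arbitrary (X i)
  let y : ∀ i, Y i := fun i => Classical.arbitrary (Y i)
  let e : X k ≃ₜ Y k :=
    { toFun := fun t => φ (update x k t) k
      invFun := fun t => φ.symm (update y k t) k
      left_inv := fun t => by
        simpa using hφ' (a := update y k (φ (update x k t) k)) (b := φ (update x k t)) (by simp)
      right_inv := fun t => by
        simpa using hφ (a := update x k (φ.symm (update y k t) k)) (b := φ.symm (update y k t))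
          (by simp)
      continuous_toFun := by fun_prop
      continuous_invFun := by fun_prop }
  exact ⟨e, fun z => hφ (by simp)⟩

lemma exists_homeomorph_of_comp_eq [∀ i, ConnectedSpace (X i)] [∀ i, ConnectedSpace (Y i)]
    {β : Type*} (φ : (∀ i, X i) ≃ₜ ∀ i, Y i) {k : ι} {ρ : X k → β} {σ : Y k → β}
    (hρ : ∀ c, IsTotallyDisconnected (ρ ⁻¹' {c})) (hσ : ∀ c, IsTotallyDisconnected (σ ⁻¹' {c}))
    (h : ∀ z, σ (φ z k) = ρ (z k)) : ∃ e : X k ≃ₜ Y k, ∀ z, φ z k = e (z k) :=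
  exists_homeomorph_of_factorsThrough_eval φ
    (factorsThrough_eval_of_comp_eq (by fun_prop) hσ h)
    (factorsThrough_eval_of_comp_eq (by fun_prop) hρ fun z => by rw [← h, φ.apply_symm_apply])

end Coordinates

lemma comp_eq_of_measurePreserving_withDensity {X Y : Type*} [TopologicalSpace X]
    [MeasurableSpace X] [BorelSpace X] [TopologicalSpace Y] [MeasurableSpace Y] [BorelSpace Y]
    {P : Measure X} {Q : Measure Y} [SigmaFinite P] [P.IsOpenPosMeasure] (φ : X ≃ₜ Y)
    (hφ : MeasurePreserving φ P Q) {ρ : X → ℝ≥0∞} {σ : Y → ℝ≥0∞} (hρ : Continuous ρ)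
    (hσ : Continuous σ) (h : MeasurePreserving φ (P.withDensity ρ) (Q.withDensity σ)) :
    σ ∘ φ = ρ := by
  have withDensity_eq : P.withDensity (σ ∘ φ) = P.withDensity ρ := by
    ext s hs
    have ht : MeasurableSet (φ.symm ⁻¹' s) := φ.symm.measurable hs
    rw [show s = φ ⁻¹' (φ.symm ⁻¹' s) by ext; simp, h.measure_preimage ht.nullMeasurableSet,
      withDensity_apply _ (φ.measurable ht), withDensity_apply _ ht]
    exact hφ.setLIntegral_comp_preimage ht hσ.measurable
  exact (Continuous.ae_eq_iff_eq P (hσ.comp φ.continuous) hρ).1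
    ((withDensity_eq_iff_of_sigmaFinite (hσ.comp φ.continuous).measurable.aemeasurable
      hρ.measurable.aemeasurable).1 withDensity_eq)

section PiMeasures

variable {ι : Type*} [Fintype ι]

lemma measurePreserving_piSplitAt [DecidableEq ι] {X : ι → Type*} [∀ i, MeasurableSpace (X i)]
    (μ : ∀ i, Measure (X i)) [∀ i, SigmaFinite (μ i)] (k : ι) :
    MeasurePreserving (Equiv.piSplitAt k X) (Measure.pi μ)
      ((μ k).prod (Measure.pi fun i : {i // i ≠ k} => μ i)) := by
  let E : (∀ i, X i) ≃ᵐ X k × ∀ i : {i // i ≠ k}, X i :=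
    { toEquiv := Equiv.piSplitAt k X
      measurable_toFun := by
        change Measurable fun z : ∀ i, X i => (z k, fun i : {i // i ≠ k} => z i)
        fun_prop
      measurable_invFun := measurable_pi_lambda _ fun i => by
        by_cases hi : i = k
        · subst hi
          simpa using measurable_fst
        · simp only [Equiv.piSplitAt_symm_apply, hi, dite_false]
          fun_prop }
  refine MeasurePreserving.symm E.symm ⟨E.symm.measurable, (Measure.pi_eq fun s _ => ?_).symm⟩
  have preimage_pi : E.symm ⁻¹' univ.pi s = s k ×ˢ univ.pi fun i : {i // i ≠ k} => s i := by
    ext x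
    obtain ⟨z, rfl⟩ := E.surjective x
    simp only [mem_preimage, E.symm_apply_apply, mem_prod, mem_univ_pi]
    refine ⟨fun h => ⟨h k, fun i => h i⟩, fun h i => ?_⟩
    by_cases hi : i = k
    · exact hi ▸ h.1
    · exact h.2 ⟨i, hi⟩
  rw [E.symm.map_apply, preimage_pi, Measure.prod_prod, Measure.pi_pi,
    Fintype.prod_eq_mul_prod_subtype_ne _ k]

variable {R : Type*} [ConditionallyCompleteLinearOrder R] [DenselyOrdered R] [TopologicalSpace R]
  [OrderTopology R] [SecondCountableTopology R] [MeasurableSpace R] [BorelSpace R]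
  {μ ν : ι → Measure R} [∀ i, IsProbabilityMeasure (μ i)]

lemma factorsThrough_eval_of_measurePreserving_pi [∀ i, IsProbabilityMeasure (ν i)]
    [∀ i, (ν i).IsOpenPosMeasure] (φ : (ι → R) ≃ₜ (ι → R))
    (hφ : MeasurePreserving φ (Measure.pi μ) (Measure.pi ν)) {k : ι}
    (e : {i // i ≠ k} → R ≃ₜ R) (he : ∀ z (i : {i // i ≠ k}), φ z i = e i (z i)) :
    (fun z => φ z k).FactorsThrough (eval k) := by
  classical
  let E : (ι → R) ≃ₜ R × ({i // i ≠ k} → R) := Homeomorph.funSplitAt R k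
  have hΦ : MeasurePreserving (E.symm.trans (φ.trans E))
      ((μ k).prod (Measure.pi fun i : {i // i ≠ k} => μ i))
      ((ν k).prod (Measure.pi fun i : {i // i ≠ k} => ν i)) :=
    (measurePreserving_piSplitAt ν k).comp
      (hφ.comp ((measurePreserving_piSplitAt μ k).symm E.toMeasurableEquiv))
  have apply_fst := factorsThrough_fst_of_measurePreserving _ hΦ (Homeomorph.piCongrRight e)
    fun x => by
      obtain ⟨z, rfl⟩ := E.surjective x
      ext i
      change φ (E.symm (E z)) i = e i (z i)
      rw [E.symm_apply_apply, he]
  intro z w hzw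
  change (E (φ z)).1 = (E (φ w)).1
  simpa only [Homeomorph.trans_apply, E.symm_apply_apply] using @apply_fst (E z) (E w) hzw

lemma exists_eq_piCongrRight_of_measurePreserving_pi [∀ i, IsProbabilityMeasure (ν i)]
    [∀ i, (μ i).IsOpenPosMeasure] [∀ i, (ν i).IsOpenPosMeasure] (φ : (ι → R) ≃ₜ (ι → R))
    (hφ : MeasurePreserving φ (Measure.pi μ) (Measure.pi ν)) (k : ι)
    (h : ∀ i ≠ k, ∃ e : R ≃ₜ R, ∀ z, φ z i = e (z i)) :
    ∃ hs : ι → R ≃ₜ R, φ = Homeomorph.piCongrRight hs := by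
  choose e he using h
  have : Nonempty R := nonempty_of_isProbabilityMeasure (μ k)
  have h_k : ∃ e : R ≃ₜ R, ∀ z, φ z k = e (z k) :=
    exists_homeomorph_of_factorsThrough_eval φ
      (factorsThrough_eval_of_measurePreserving_pi φ hφ (fun i => e i i.2) fun z i => he i i.2 z)
      (factorsThrough_eval_of_measurePreserving_pi φ.symm
        (MeasurePreserving.symm φ.toMeasurableEquiv hφ) (fun i => (e i i.2).symm) fun z i => by
          rw [Homeomorph.eq_symm_apply, ← he i i.2, φ.apply_symm_apply])
  have h_all (i : ι) : ∃ e : R ≃ₜ R, ∀ z, φ z i = e (z i) := by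
    by_cases hi : i = k
    · exact hi ▸ h_k
    · exact ⟨e i hi, he i hi⟩
  choose hs h_hs using h_all
  exact ⟨hs, Homeomorph.ext fun z => funext fun i => h_hs i z⟩

lemma exists_homeomorph_of_measurePreserving_pi_withDensity [∀ i, (μ i).IsOpenPosMeasure]
    (φ : (ι → R) ≃ₜ (ι → R)) (hφ : MeasurePreserving φ (Measure.pi μ) (Measure.pi ν)) {k : ι}
    {ρ σ : R → ℝ≥0∞} (hρ : Continuous ρ) (hσ : Continuous σ)
    (hρ_fiber : ∀ c, IsTotallyDisconnected (ρ ⁻¹' {c}))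
    (hσ_fiber : ∀ c, IsTotallyDisconnected (σ ⁻¹' {c}))
    (h : MeasurePreserving φ ((Measure.pi μ).withDensity fun z => ρ (z k))
      ((Measure.pi ν).withDensity fun z => σ (z k))) :
    ∃ e : R ≃ₜ R, ∀ z, φ z k = e (z k) := by
  have : ConnectedSpace R := { toNonempty := nonempty_of_isProbabilityMeasure (μ k) }
  have density_eq := comp_eq_of_measurePreserving_withDensity φ hφ
    (hρ.comp (continuous_apply k)) (hσ.comp (continuous_apply k)) h
  exact exists_homeomorph_of_comp_eq φ hρ_fiber hσ_fiber (congrFun density_eq)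

end PiMeasures

lemma pi_withDensity_ofReal {ι : Type*} [Fintype ι] {X : ι → Type*} [∀ i, MeasurableSpace (X i)]
    (μ : ∀ i, Measure (X i)) [∀ i, SigmaFinite (μ i)] {f : ∀ i, X i → ℝ}
    (hf : ∀ i, Integrable (f i) (μ i)) (hf_nonneg : ∀ i x, 0 ≤ f i x) :
    Measure.pi (fun i => (μ i).withDensity fun x => ENNReal.ofReal (f i x)) =
      (Measure.pi μ).withDensity fun z => ENNReal.ofReal (∏ i, f i (z i)) := by
  refine Measure.pi_eq fun s hs => ?_
  have withDensity_apply_eq (i : ι) : (μ i).withDensity (fun x => ENNReal.ofReal (f i x)) (s i) =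
      ENNReal.ofReal (∫ x in s i, f i x ∂μ i) := by
    rw [withDensity_apply _ (hs i), ofReal_integral_eq_lintegral_ofReal (hf i).restrict
      (ae_of_all _ (hf_nonneg i))]
  rw [withDensity_apply _ (MeasurableSet.univ_pi hs), Measure.restrict_pi_pi,
    ← ofReal_integral_eq_lintegral_ofReal (Integrable.fintype_prod_dep fun i => (hf i).restrict)
      (ae_of_all _ fun z => Finset.prod_nonneg fun i _ => hf_nonneg i (z i)),
    integral_fintype_prod_eq_prod,
    ENNReal.ofReal_prod_of_nonneg fun i _ => integral_nonneg (hf_nonneg i)]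
  exact Finset.prod_congr rfl fun i _ => (withDensity_apply_eq i).symm

section Densities

/-- A strictly positive continuous probability density on `ℝ`, the only regularity that the
identifiability argument asks of the latent densities. -/
structure IsContinuousDensity (r : ℝ → ℝ) : Prop where
  pos (x : ℝ) : 0 < r x
  continuous : Continuous r
  integral_eq_one : ∫ x, r x = 1

lemma IsC1Density.isContinuousDensity {r : ℝ → ℝ} (hr : IsC1Density r) : IsContinuousDensity r :=
  ⟨hr.1, hr.2.1.continuous, hr.2.2⟩

namespace IsContinuousDensity

variable {r : ℝ → ℝ}

lemma integrable (hr : IsContinuousDensity r) : Integrable r :=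
  integrable_of_integral_eq_one hr.integral_eq_one

lemma isProbabilityMeasure_densityMeasure₁ (hr : IsContinuousDensity r) :
    IsProbabilityMeasure (densityMeasure₁ r) := by
  constructor
  rw [densityMeasure₁, withDensity_apply _ MeasurableSet.univ, setLIntegral_univ,
    ← ofReal_integral_eq_lintegral_ofReal hr.integrable (ae_of_all _ fun x => (hr.pos x).le),
    hr.integral_eq_one, ENNReal.ofReal_one]

lemma isOpenPosMeasure_densityMeasure₁ (hr : IsContinuousDensity r) :
    (densityMeasure₁ r).IsOpenPosMeasure :=
  (withDensity_absolutelyContinuous' hr.continuous.measurable.ennreal_ofReal.aemeasurable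
    (ae_of_all _ fun x => (ENNReal.ofReal_pos.2 (hr.pos x)).ne')).isOpenPosMeasure

end IsContinuousDensity

variable {d : ℕ} {p : Fin d → ℝ → ℝ}

lemma densityMeasure_prod (hp : ∀ i, IsContinuousDensity (p i)) :
    densityMeasure (fun z => ∏ i, p i (z i)) = Measure.pi fun i => densityMeasure₁ (p i) :=
  (pi_withDensity_ofReal (fun _ => volume) (fun i => (hp i).integrable)
    fun i x => ((hp i).pos x).le).symm

lemma densityMeasure_intervention (hp : ∀ i, IsContinuousDensity (p i)) {u : ℝ → ℝ}
    (hu : Measurable u) (k : Fin d) :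
    densityMeasure (fun z => u (z k) * ∏ i ∈ ({k} : Finset (Fin d))ᶜ, p i (z i)) =
      (Measure.pi fun i => densityMeasure₁ (p i)).withDensity
        fun z => ENNReal.ofReal (u (z k) / p k (z k)) := by
  have hp_meas (i : Fin d) : Measurable (p i) := (hp i).continuous.measurable
  rw [← densityMeasure_prod hp, densityMeasure, densityMeasure,
    ← withDensity_mul _ (by fun_prop) (by fun_prop)]
  congr 1
  ext z
  have hz : ∏ i, p i (z i) = p k (z k) * ∏ i ∈ ({k} : Finset (Fin d))ᶜ, p i (z i) :=
    Fintype.prod_eq_mul_prod_compl k _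
  rw [Pi.mul_apply, ← ENNReal.ofReal_mul (Finset.prod_nonneg fun i _ => ((hp i).pos (z i)).le), hz]
  have hpk := ((hp k).pos (z k)).ne'
  congr 1
  field_simp

end Densities

section Discrepancy

/-- `u` is a constant multiple of `v` on no nonempty open set. For positive functions this is the
topological content of the a.e. inequality `(log u)′ ≠ (log v)′`. -/
def NowhereProportional (u v : ℝ → ℝ) : Prop :=
  ∀ c : ℝ, interior {x | u x = c * v x} = ∅

lemma nowhereProportional_of_ae_deriv_log_ne {u v : ℝ → ℝ} (hu : ∀ x, u x ≠ 0)
    (h : ∀ᵐ x, deriv (fun t => Real.log (v t)) x ≠ deriv (fun t => Real.log (u t)) x) :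
    NowhereProportional u v := by
  intro c
  by_contra! hne
  obtain ⟨x, hx, hx_ne⟩ := (Measure.dense_of_ae h).inter_open_nonempty _ isOpen_interior hne
  have log_eq : (fun t => Real.log (u t)) =ᶠ[nhds x] fun t => Real.log c + Real.log (v t) := by
    filter_upwards [mem_interior_iff_mem_nhds.1 hx] with t (ht : u t = c * v t)
    rw [ht, Real.log_mul (left_ne_zero_of_mul (ht ▸ hu t)) (right_ne_zero_of_mul (ht ▸ hu t))]
  exact hx_ne (by rw [log_eq.deriv_eq, deriv_const_add])

lemma isTotallyDisconnected_of_interior_eq_empty {R : Type*} [ConditionallyCompleteLinearOrder R]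
    [DenselyOrdered R] [TopologicalSpace R] [OrderTopology R] {s : Set R}
    (hs : interior s = ∅) : IsTotallyDisconnected s :=
  isTotallyDisconnected_iff_lt.2 fun x _ y _ hxy => by
    by_contra! h
    have Ioo_subset : Ioo x y ⊆ interior s :=
      interior_maximal (fun z hz => by_contra fun hzs => h z hzs hz) isOpen_Ioo
    exact (nonempty_Ioo.2 hxy).not_subset_empty (hs ▸ Ioo_subset)

lemma NowhereProportional.isTotallyDisconnected_fiber {u v : ℝ → ℝ} (h : NowhereProportional u v)
    (hu : ∀ x, 0 ≤ u x) (hv : ∀ x, 0 < v x) (c : ℝ≥0∞) :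
    IsTotallyDisconnected ((fun x => ENNReal.ofReal (u x / v x)) ⁻¹' {c}) := by
  have fiber_subset :
      (fun x => ENNReal.ofReal (u x / v x)) ⁻¹' {c} ⊆ {x | u x = c.toReal * v x} := by
    rintro x rfl
    have hx : 0 ≤ u x / v x := div_nonneg (hu x) (hv x).le
    simp [ENNReal.toReal_ofReal hx, (hv x).ne']
  exact isTotallyDisconnected_of_interior_eq_empty
    (subset_empty_iff.1 (h c.toReal ▸ interior_mono fiber_subset))

end Discrepancy

lemma measurePreserving_trans_symm_of_map_eq {X Y Z : Type*} [TopologicalSpace X]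
    [MeasurableSpace X] [BorelSpace X] [TopologicalSpace Y] [MeasurableSpace Y] [BorelSpace Y]
    [TopologicalSpace Z] [MeasurableSpace Z] [BorelSpace Z] {P : Measure X} {Q : Measure Y}
    (f : X ≃ₜ Z) (f' : Y ≃ₜ Z) (h : P.map f = Q.map f') :
    MeasurePreserving (f.trans f'.symm) P Q :=
  (MeasurePreserving.symm f'.toMeasurableEquiv ⟨f'.measurable, h.symm⟩).comp
    (f.measurable.measurePreserving P)

lemma inSScaling_of_eq_piCongrRight {d : ℕ} {φ : (Fin d → ℝ) ≃ₜ (Fin d → ℝ)}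
    (h : ∃ hs : Fin d → ℝ ≃ₜ ℝ, φ = Homeomorph.piCongrRight hs) (hφ : ContDiff ℝ 1 φ)
    (hφ_symm : ContDiff ℝ 1 φ.symm) : InSScaling φ := by
  obtain ⟨hs, rfl⟩ := h
  have contDiff_apply_const {ψ : (Fin d → ℝ) ≃ₜ (Fin d → ℝ)} (hψ : ContDiff ℝ 1 ψ) (i : Fin d) :
      ContDiff ℝ 1 fun t => ψ (fun _ => t) i := by
    fun_prop
  exact ⟨fun i => hs i, fun i => ⟨contDiff_apply_const hφ i, (hs i).symm,
    contDiff_apply_const hφ_symm i, (hs i).symm_apply_apply, (hs i).apply_symm_apply⟩,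
    fun _ _ => rfl⟩

theorem ica_d_minus_one_interventions_identifiability_general {m : ℕ}
    {p q : Fin (m + 1) → ℝ → ℝ}
    (hp : ∀ i, IsContinuousDensity (p i)) (hq : ∀ i, IsContinuousDensity (q i))
    {pt qt : Fin m → ℝ → ℝ}
    (hpt : ∀ k, Continuous (pt k)) (hqt : ∀ k, Continuous (qt k))
    (hpt_nonneg : ∀ k x, 0 ≤ pt k x) (hqt_nonneg : ∀ k x, 0 ≤ qt k x)
    (hdiscp : ∀ k, NowhereProportional (pt k) (p k.castSucc))
    (hdiscq : ∀ k, NowhereProportional (qt k) (q k.castSucc))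
    (f f' : (Fin (m + 1) → ℝ) ≃ₜ (Fin (m + 1) → ℝ))
    (hmatch0 : Measure.map f (densityMeasure fun z => ∏ i, p i (z i)) =
        Measure.map f' (densityMeasure fun z => ∏ i, q i (z i)))
    (hmatch : ∀ k : Fin m,
        Measure.map f (densityMeasure fun z =>
            pt k (z k.castSucc) *
              ∏ i ∈ ({k.castSucc} : Finset (Fin (m + 1)))ᶜ, p i (z i)) =
        Measure.map f' (densityMeasure fun z =>
            qt k (z k.castSucc) *
              ∏ i ∈ ({k.castSucc} : Finset (Fin (m + 1)))ᶜ, q i (z i))) :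
    ∃ hs : Fin (m + 1) → ℝ ≃ₜ ℝ, f.trans f'.symm = Homeomorph.piCongrRight hs := by
  have := fun i => (hp i).isProbabilityMeasure_densityMeasure₁
  have := fun i => (hq i).isProbabilityMeasure_densityMeasure₁
  have := fun i => (hp i).isOpenPosMeasure_densityMeasure₁
  have := fun i => (hq i).isOpenPosMeasure_densityMeasure₁
  have continuous_ratio {u r : ℝ → ℝ} (hu : Continuous u) (hr : IsContinuousDensity r) :
      Continuous fun x => ENNReal.ofReal (u x / r x) :=
    ENNReal.continuous_ofReal.comp (hu.div hr.continuous fun x => (hr.pos x).ne')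
  simp_rw [densityMeasure_prod hp, densityMeasure_prod hq] at hmatch0
  simp_rw [densityMeasure_intervention hp (hpt _).measurable,
    densityMeasure_intervention hq (hqt _).measurable] at hmatch
  have hφ := measurePreserving_trans_symm_of_map_eq f f' hmatch0
  refine exists_eq_piCongrRight_of_measurePreserving_pi _ hφ (Fin.last m)
    (Fin.lastCases (fun h => absurd rfl h) fun k _ => ?_)
  exact exists_homeomorph_of_measurePreserving_pi_withDensity _ hφ
    (continuous_ratio (hpt k) (hp _)) (continuous_ratio (hqt k) (hq _))
    ((hdiscp k).isTotallyDisconnected_fiber (hpt_nonneg k) (hp _).pos)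
    ((hdiscq k).isTotallyDisconnected_fiber (hqt_nonneg k) (hq _).pos)
    (measurePreserving_trans_symm_of_map_eq f f' (hmatch k))

end

/-- **Proposition (nonlinear ICA with d−1 single-node interventions).** (Here the dimension
is `d = m + 1 ≥ 1`, and the intervened targets are the first `d − 1` variables `k.castSucc`
for `k : Fin m`.) The latent graph is empty; two models given by strictly positive C¹
densities `(p i)`, `(pt k)` and `(q i)`, `(qt k)` satisfy the interventional discrepancy
`(log p k)′ ≠ (log pt k)′` a.e. (and likewise for `q`). If `f`, `f′` are C¹ diffeomorphisms
with matching pushforwards in the unintervened regime and in every interventional regime,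
then `f′⁻¹ ∘ f ∈ S_scaling`. -/
theorem ica_d_minus_one_interventions_identifiability {m : ℕ}
    (p q : Fin (m + 1) → ℝ → ℝ)
    (hp : ∀ i, IsC1Density (p i)) (hq : ∀ i, IsC1Density (q i))
    (pt qt : Fin m → ℝ → ℝ)
    (hpt : ∀ k, IsC1Density (pt k)) (hqt : ∀ k, IsC1Density (qt k))
    (hdiscp : ∀ k : Fin m, ∀ᵐ (x : ℝ) ∂volume,
        deriv (fun t => Real.log (p k.castSucc t)) x ≠
          deriv (fun t => Real.log (pt k t)) x)
    (hdiscq : ∀ k : Fin m, ∀ᵐ (x : ℝ) ∂volume,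
        deriv (fun t => Real.log (q k.castSucc t)) x ≠
          deriv (fun t => Real.log (qt k t)) x)
    (f f' g' : (Fin (m + 1) → ℝ) → (Fin (m + 1) → ℝ))
    (hf : IsC1Diffeo f) (hf' : ContDiff ℝ 1 f') (hg' : ContDiff ℝ 1 g')
    (hinv₁ : Function.LeftInverse g' f') (hinv₂ : Function.RightInverse g' f')
    (hmatch0 : Measure.map f (densityMeasure fun z => ∏ i, p i (z i)) =
        Measure.map f' (densityMeasure fun z => ∏ i, q i (z i)))
    (hmatch : ∀ k : Fin m,
        Measure.map f (densityMeasure fun z =>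
            pt k (z k.castSucc) *
              ∏ i ∈ ({k.castSucc} : Finset (Fin (m + 1)))ᶜ, p i (z i)) =
        Measure.map f' (densityMeasure fun z =>
            qt k (z k.castSucc) *
              ∏ i ∈ ({k.castSucc} : Finset (Fin (m + 1)))ᶜ, q i (z i))) :
    InSScaling (g' ∘ f) := by
  obtain ⟨hf, g, hg, hgf, hfg⟩ := hf
  exact inSScaling_of_eq_piCongrRight
    (ica_d_minus_one_interventions_identifiability_general
      (fun i => (hp i).isContinuousDensity) (fun i => (hq i).isContinuousDensity)
      (fun k => (hpt k).2.1.continuous) (fun k => (hqt k).2.1.continuous)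
      (fun k x => ((hpt k).1 x).le) (fun k x => ((hqt k).1 x).le)
      (fun k => nowhereProportional_of_ae_deriv_log_ne (fun x => ((hpt k).1 x).ne') (hdiscp k))
      (fun k => nowhereProportional_of_ae_deriv_log_ne (fun x => ((hqt k).1 x).ne') (hdiscq k))
      ⟨⟨f, g, hgf, hfg⟩, hf.continuous, hg.continuous⟩
      ⟨⟨f', g', hinv₁, hinv₂⟩, hf'.continuous, hg'.continuous⟩ hmatch0 hmatch)
    (hg'.comp hf) (hg.comp hf')
end
end

section
/- Let d ≥ 2. There exist strictly positive C¹ probability densities p_1,…,p_d on ℝ, strictly positive C¹ intervened densities p̃_1,…,p̃_{d−2} on ℝ with (log p_k)′(x) ≠ (log p̃_k)′(x) for Lebesgue-a.e. x ∈ ℝ for every k ∈ [d−2], and a C¹ diffeomorphism φ : ℝ^d → ℝ^d with φ ∉ S_reparam, such that φ_*P^k = P^k for every k ∈ {0,1,…,d−2}, where P^0 is the measure with density ∏_{i=1}^d p_i(z_i) and P^k (k ≥ 1) the measure with density p̃_k(z_k)∏_{i≠k}p_i(z_i). Consequently, nonlinear ICA with d−2 single-node interventions on distinct targets satisfying the interventional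 discrepancy is not identifiable up to S_reparam: for any C¹ diffeomorphism f, the mixing functions f and f∘φ⁻¹ generate identical pushforward distributions in every regime while (f∘φ⁻¹)⁻¹∘f = φ ∉ S_reparam. -/
open MeasureTheory

noncomputable section

/-!
No intervention touches the last two coordinates. If these are i.i.d. centred Gaussian, their joint
density depends only on the sum of their squares, so every orthogonal map of that coordinate plane
preserves all regimes at once; a reflection in a line oblique to the coordinate axes and to their
bisectors mixes the two coordinates. Reflections are used rather than rotations because they are
their own inverses.
-/

open ProbabilityTheory Function
open scoped ENNReal NNReal

section Gaussian

lemma contDiff_gaussianPDFReal (μ : ℝ) (v : ℝ≥0) {n : WithTop ℕ∞} :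
    ContDiff ℝ n (gaussianPDFReal μ v) := by
  rw [gaussianPDFReal_def]
  fun_prop

lemma isC1Density_gaussianPDFReal (μ : ℝ) {v : ℝ≥0} (hv : v ≠ 0) :
    IsC1Density (gaussianPDFReal μ v) :=
  ⟨fun x => gaussianPDFReal_pos μ v x hv, contDiff_gaussianPDFReal μ v,
    integral_gaussianPDFReal_eq_one μ hv⟩

lemma log_gaussianPDFReal (μ : ℝ) {v : ℝ≥0} (hv : v ≠ 0) (x : ℝ) :
    Real.log (gaussianPDFReal μ v x) =
      Real.log (√(2 * Real.pi * v))⁻¹ + -(x - μ) ^ 2 / (2 * v) := by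
  have hconst : (√(2 * Real.pi * v))⁻¹ ≠ 0 := by positivity
  rw [gaussianPDFReal, Real.log_mul hconst (Real.exp_pos _).ne', Real.log_exp]

lemma deriv_log_gaussianPDFReal (μ : ℝ) {v : ℝ≥0} (hv : v ≠ 0) (x : ℝ) :
    deriv (fun t => Real.log (gaussianPDFReal μ v t)) x = -(x - μ) / v := by
  have hsq : HasDerivAt (fun t : ℝ => -(t - μ) ^ 2) (2 * -(x - μ)) x := by
    simpa [← mul_neg] using (((hasDerivAt_id' x).sub_const μ).fun_pow 2).fun_neg
  simp only [log_gaussianPDFReal μ hv]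
  rw [((hsq.div_const (2 * (v : ℝ))).const_add _).deriv, mul_div_mul_left _ _ two_ne_zero]

lemma deriv_log_gaussianPDFReal_ne {μ ν : ℝ} (hμν : μ ≠ ν) {v : ℝ≥0} (hv : v ≠ 0) (x : ℝ) :
    deriv (fun t => Real.log (gaussianPDFReal μ v t)) x ≠
      deriv (fun t => Real.log (gaussianPDFReal ν v t)) x := by
  rw [deriv_log_gaussianPDFReal μ hv, deriv_log_gaussianPDFReal ν hv]
  intro h
  have hsub : -(x - μ) = -(x - ν) := (div_left_inj' (NNReal.coe_ne_zero.mpr hv)).mp h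
  exact hμν (by linarith)

lemma gaussianPDFReal_zero_mul_congr (v : ℝ≥0) {x y x' y' : ℝ}
    (h : x ^ 2 + y ^ 2 = x' ^ 2 + y' ^ 2) :
    gaussianPDFReal 0 v x * gaussianPDFReal 0 v y =
      gaussianPDFReal 0 v x' * gaussianPDFReal 0 v y' := by
  have hprod (s t : ℝ) : gaussianPDFReal 0 v s * gaussianPDFReal 0 v t =
      ((√(2 * Real.pi * v))⁻¹) ^ 2 * Real.exp (-(s ^ 2 + t ^ 2) / (2 * v)) := by
    simp only [gaussianPDFReal, sub_zero]
    rw [mul_mul_mul_comm, ← Real.exp_add, ← add_div, ← neg_add, ← sq]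
  rw [hprod, hprod, h]

end Gaussian

section MeasurePreserving

lemma measurePreserving_of_involutive {E : Type*} [NormedAddCommGroup E] [NormedSpace ℝ E]
    [FiniteDimensional ℝ E] [MeasurableSpace E] [BorelSpace E] {L : E →L[ℝ] E}
    (hL : Involutive L) (μ : Measure E) [μ.IsAddHaarMeasure] : MeasurePreserving L μ μ := by
  have hdet_sq : LinearMap.det (L : E →ₗ[ℝ] E) * LinearMap.det (L : E →ₗ[ℝ] E) = 1 := by
    have hcomp : (L : E →ₗ[ℝ] E) ∘ₗ L = LinearMap.id := LinearMap.ext hL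
    rw [← LinearMap.det_comp, hcomp, LinearMap.det_id]
  have habs : |(LinearMap.det (L : E →ₗ[ℝ] E))⁻¹| = 1 := by
    rcases mul_self_eq_one_iff.mp hdet_sq with h | h <;> simp [h]
  refine ⟨L.continuous.measurable, ?_⟩
  have hmap := Measure.map_linearMap_addHaar_eq_smul_addHaar μ (left_ne_zero_of_mul_eq_one hdet_sq)
  rwa [habs, ENNReal.ofReal_one, one_smul] at hmap

lemma measurePreserving_withDensity_of_comp_eq {α : Type*} [MeasurableSpace α] {μ : Measure α}
    {φ : α → α} (hφ : MeasurePreserving φ μ μ) (hemb : MeasurableEmbedding φ) {ρ : α → ℝ≥0∞}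
    (hρ : ∀ z, ρ (φ z) = ρ z) :
    MeasurePreserving φ (μ.withDensity ρ) (μ.withDensity ρ) := by
  refine ⟨hφ.measurable, Measure.ext fun s hs => ?_⟩
  rw [Measure.map_apply hφ.measurable hs, withDensity_apply _ (hφ.measurable hs),
    withDensity_apply _ hs, ← hφ.setLIntegral_comp_preimage_emb hemb ρ s]
  simp only [hρ]

end MeasurePreserving

section PlaneReflection

variable {ι : Type*} [DecidableEq ι] {a b i : ι} {θ : ℝ}

/-- For `a ≠ b`, the reflection of `ℝ^ι` acting on the `(a, b)`-coordinate plane by the matrix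
`[[cos θ, sin θ], [sin θ, -cos θ]]` and fixing every other coordinate; it is the symmetry `φ` that
obstructs identifiability. -/
def planeReflection (a b : ι) (θ : ℝ) : (ι → ℝ) →L[ℝ] (ι → ℝ) :=
  ContinuousLinearMap.pi <| update (update (ContinuousLinearMap.proj (R := ℝ) (φ := fun _ : ι => ℝ))
    a (Real.cos θ • .proj a + Real.sin θ • .proj b))
    b (Real.sin θ • .proj a - Real.cos θ • .proj b)

lemma planeReflection_apply_left (hab : a ≠ b) (z : ι → ℝ) :
    planeReflection a b θ z a = Real.cos θ * z a + Real.sin θ * z b := by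
  simp [planeReflection, hab]

lemma planeReflection_apply_right (z : ι → ℝ) :
    planeReflection a b θ z b = Real.sin θ * z a - Real.cos θ * z b := by
  simp [planeReflection]

lemma planeReflection_apply_of_ne (ha : i ≠ a) (hb : i ≠ b) (z : ι → ℝ) :
    planeReflection a b θ z i = z i := by
  simp [planeReflection, ha, hb]

lemma planeReflection_sq_add_sq (hab : a ≠ b) (z : ι → ℝ) :
    planeReflection a b θ z a ^ 2 + planeReflection a b θ z b ^ 2 = z a ^ 2 + z b ^ 2 := by
  rw [planeReflection_apply_left hab, planeReflection_apply_right]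
  linear_combination (z a ^ 2 + z b ^ 2) * Real.cos_sq_add_sin_sq θ

lemma planeReflection_involutive (hab : a ≠ b) : Involutive (planeReflection a b θ) := by
  intro z
  ext i
  by_cases ha : i = a
  · subst ha
    rw [planeReflection_apply_left hab, planeReflection_apply_left hab, planeReflection_apply_right]
    linear_combination z i * Real.cos_sq_add_sin_sq θ
  by_cases hb : i = b
  · subst hb
    rw [planeReflection_apply_right, planeReflection_apply_left hab, planeReflection_apply_right]
    linear_combination z i * Real.cos_sq_add_sin_sq θ
  rw [planeReflection_apply_of_ne ha hb, planeReflection_apply_of_ne ha hb]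

lemma prod_planeReflection [Fintype ι] {M : Type*} [CommMonoid M] (hab : a ≠ b) {p : ι → ℝ → M}
    (hp : ∀ x y x' y', x ^ 2 + y ^ 2 = x' ^ 2 + y' ^ 2 → p a x * p b y = p a x' * p b y')
    (z : ι → ℝ) : ∏ i, p i (planeReflection a b θ z i) = ∏ i, p i (z i) := by
  have hpair : ∏ i ∈ {a, b}, p i (planeReflection a b θ z i) = ∏ i ∈ {a, b}, p i (z i) := by
    rw [Finset.prod_pair hab, Finset.prod_pair hab]
    exact hp _ _ _ _ (planeReflection_sq_add_sq hab z)
  have hcompl : ∏ i ∈ {a, b}ᶜ, p i (planeReflection a b θ z i) = ∏ i ∈ {a, b}ᶜ, p i (z i) := by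
    refine Finset.prod_congr rfl fun i hi => ?_
    obtain ⟨ha, hb⟩ : i ≠ a ∧ i ≠ b := by simpa using hi
    rw [planeReflection_apply_of_ne ha hb]
  rw [← Finset.prod_mul_prod_compl {a, b}, hpair, hcompl, Finset.prod_mul_prod_compl]

end PlaneReflection

section Identifiability

variable {d : ℕ} {a b : Fin d}

lemma isC1Diffeo_planeReflection (hab : a ≠ b) (θ : ℝ) : IsC1Diffeo (planeReflection a b θ) :=
  ⟨ContinuousLinearMap.contDiff _, _, ContinuousLinearMap.contDiff _,
    (planeReflection_involutive hab).leftInverse, (planeReflection_involutive hab).rightInverse⟩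

lemma InSReparam.exists_dependsOnlyOn_singleton {g : (Fin d → ℝ) → (Fin d → ℝ)}
    (hg : InSReparam g) (i : Fin d) : ∃ j, DependsOnlyOn (fun z => g z i) {j} := by
  obtain ⟨σ, h, -, hgh⟩ := hg
  refine ⟨σ i, fun z w hzw => ?_⟩
  simp only [hgh, hzw (σ i) (Finset.mem_singleton_self _)]

lemma not_inSReparam_planeReflection (hab : a ≠ b) {θ : ℝ} (hsin : Real.sin θ ≠ 0)
    (hcos : Real.cos θ ≠ 0) : ¬ InSReparam (planeReflection a b θ) := by
  intro hφ
  obtain ⟨j, hj⟩ := hφ.exists_dependsOnlyOn_singleton b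
  have hconst {k : Fin d} (hk : k ≠ j) : planeReflection a b θ (Pi.single k 1) b = 0 := by
    simpa using hj (Pi.single k 1) 0 (by simp [hk.symm])
  have hja : a = j := by
    by_contra hne
    exact hsin (by simpa [planeReflection_apply_right, hab.symm] using hconst hne)
  have hjb : b = j := by
    by_contra hne
    exact hcos (by simpa [planeReflection_apply_right, hab] using hconst hne)
  exact hab (hja.trans hjb.symm)

lemma measurePreserving_planeReflection_densityMeasure (hab : a ≠ b) (θ : ℝ) {p : Fin d → ℝ → ℝ}
    (hp : ∀ x y x' y', x ^ 2 + y ^ 2 = x' ^ 2 + y' ^ 2 → p a x * p b y = p a x' * p b y') :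
    MeasurePreserving (planeReflection a b θ) (densityMeasure fun z => ∏ i, p i (z i))
      (densityMeasure fun z => ∏ i, p i (z i)) := by
  have hinv := planeReflection_involutive (θ := θ) hab
  have hvol := measurePreserving_of_involutive hinv volume
  have hemb := (MeasurableEquiv.ofInvolutive _ hinv hvol.measurable).measurableEmbedding
  exact measurePreserving_withDensity_of_comp_eq hvol hemb fun z =>
    congrArg ENNReal.ofReal (prod_planeReflection hab hp z)

lemma prod_update_apply_eq_mul_prod_compl {ι α M : Type*} [Fintype ι] [DecidableEq ι]
    [CommMonoid M] (p : ι → α → M) (k : ι) (q : α → M) (z : ι → α) :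
    ∏ i, update p k q i (z i) = q (z k) * ∏ i ∈ ({k} : Finset ι)ᶜ, p i (z i) := by
  rw [Fintype.prod_eq_mul_prod_compl k, update_self]
  congr 1
  refine Finset.prod_congr rfl fun i hi => ?_
  rw [update_of_ne (by simpa using hi)]

theorem ica_d_minus_two_interventions_not_identifiable_general {κ : Type*} (hab : a ≠ b)
    {t : κ → Fin d} (hta : ∀ k, t k ≠ a) (htb : ∀ k, t k ≠ b)
    {p : Fin d → ℝ → ℝ} (pt : κ → ℝ → ℝ)
    (hp : ∀ x y x' y', x ^ 2 + y ^ 2 = x' ^ 2 + y' ^ 2 → p a x * p b y = p a x' * p b y') :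
    ∃ φ ψ : (Fin d → ℝ) → (Fin d → ℝ),
      IsC1Diffeo φ ∧ ¬ InSReparam φ ∧ LeftInverse ψ φ ∧ RightInverse ψ φ ∧
      Measure.map φ (densityMeasure fun z => ∏ i, p i (z i)) =
        densityMeasure (fun z => ∏ i, p i (z i)) ∧
      (∀ k, Measure.map φ (densityMeasure fun z =>
            pt k (z (t k)) * ∏ i ∈ ({t k} : Finset (Fin d))ᶜ, p i (z i)) =
          densityMeasure fun z =>
            pt k (z (t k)) * ∏ i ∈ ({t k} : Finset (Fin d))ᶜ, p i (z i)) ∧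
      (∀ f : (Fin d → ℝ) → (Fin d → ℝ), Measurable f →
        Measure.map f (densityMeasure fun z => ∏ i, p i (z i)) =
          Measure.map (f ∘ ψ) (densityMeasure fun z => ∏ i, p i (z i)) ∧
        ∀ k, Measure.map f (densityMeasure fun z =>
              pt k (z (t k)) * ∏ i ∈ ({t k} : Finset (Fin d))ᶜ, p i (z i)) =
          Measure.map (f ∘ ψ) (densityMeasure fun z =>
              pt k (z (t k)) * ∏ i ∈ ({t k} : Finset (Fin d))ᶜ, p i (z i))) := by
  have hsin : Real.sin (Real.pi / 4) ≠ 0 := by rw [Real.sin_pi_div_four]; positivity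
  have hcos : Real.cos (Real.pi / 4) ≠ 0 := by rw [Real.cos_pi_div_four]; positivity
  have hinv := planeReflection_involutive (θ := Real.pi / 4) hab
  have hobs := measurePreserving_planeReflection_densityMeasure hab (Real.pi / 4) hp
  have hint (k : κ) := measurePreserving_planeReflection_densityMeasure hab (Real.pi / 4)
    (p := update p (t k) (pt k)) (by rwa [update_of_ne (hta k).symm, update_of_ne (htb k).symm])
  simp only [prod_update_apply_eq_mul_prod_compl] at hint
  refine ⟨planeReflection a b (Real.pi / 4), planeReflection a b (Real.pi / 4),
    isC1Diffeo_planeReflection hab _, not_inSReparam_planeReflection hab hsin hcos,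
    hinv.leftInverse, hinv.rightInverse, hobs.map_eq, fun k => (hint k).map_eq,
    fun f hf => ⟨?_, fun k => ?_⟩⟩
  · rw [← Measure.map_map hf hobs.measurable, hobs.map_eq]
  · rw [← Measure.map_map hf (hint k).measurable, (hint k).map_eq]

end Identifiability

/-- **Proposition (d−2 interventions are not sufficient for nonlinear ICA).** (Here the
dimension is `d = m + 2 ≥ 2`, and the intervened targets are the first `d − 2` variables,
embedded via `k ↦ k.castSucc.castSucc` for `k : Fin m`.) There exist strictly positive C¹
densities `p i`, intervened densities `pt k` satisfying the interventional discrepancy, and a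
C¹ diffeomorphism `φ ∉ S_reparam` (with inverse `ψ`) preserving the joint distribution of
every regime. Consequently, for any C¹ diffeomorphism `f`, the mixing functions `f` and
`f ∘ ψ = f ∘ φ⁻¹` generate identical pushforward distributions in every regime while
`(f ∘ φ⁻¹)⁻¹ ∘ f = φ ∉ S_reparam`. -/
theorem ica_d_minus_two_interventions_not_identifiable {m : ℕ} :
    ∃ (p : Fin (m + 2) → ℝ → ℝ) (pt : Fin m → ℝ → ℝ)
      (φ ψ : (Fin (m + 2) → ℝ) → (Fin (m + 2) → ℝ)),
      (∀ i, IsC1Density (p i)) ∧ (∀ k, IsC1Density (pt k)) ∧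
      (∀ k : Fin m, ∀ᵐ (x : ℝ) ∂volume,
        deriv (fun t => Real.log (p k.castSucc.castSucc t)) x ≠
          deriv (fun t => Real.log (pt k t)) x) ∧
      IsC1Diffeo φ ∧ ¬ InSReparam φ ∧
      Function.LeftInverse ψ φ ∧ Function.RightInverse ψ φ ∧
      Measure.map φ (densityMeasure fun z => ∏ i, p i (z i)) =
        densityMeasure (fun z => ∏ i, p i (z i)) ∧
      (∀ k : Fin m,
        Measure.map φ (densityMeasure fun z =>
            pt k (z k.castSucc.castSucc) *
              ∏ i ∈ ({k.castSucc.castSucc} : Finset (Fin (m + 2)))ᶜ, p i (z i)) =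
          densityMeasure fun z =>
            pt k (z k.castSucc.castSucc) *
              ∏ i ∈ ({k.castSucc.castSucc} : Finset (Fin (m + 2)))ᶜ, p i (z i)) ∧
      (∀ f : (Fin (m + 2) → ℝ) → (Fin (m + 2) → ℝ), IsC1Diffeo f →
        Measure.map f (densityMeasure fun z => ∏ i, p i (z i)) =
          Measure.map (f ∘ ψ) (densityMeasure fun z => ∏ i, p i (z i)) ∧
        ∀ k : Fin m,
          Measure.map f (densityMeasure fun z =>
              pt k (z k.castSucc.castSucc) *
                ∏ i ∈ ({k.castSucc.castSucc} : Finset (Fin (m + 2)))ᶜ, p i (z i)) =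
          Measure.map (f ∘ ψ) (densityMeasure fun z =>
              pt k (z k.castSucc.castSucc) *
                ∏ i ∈ ({k.castSucc.castSucc} : Finset (Fin (m + 2)))ᶜ, p i (z i))) := by
  have hne : (Fin.last m).castSucc ≠ Fin.last (m + 1) := (Fin.castSucc_lt_last _).ne
  obtain ⟨φ, ψ, hφ, hnot, hl, hr, hobs, hint, hf⟩ :=
    ica_d_minus_two_interventions_not_identifiable_general hne
      (t := fun k : Fin m => k.castSucc.castSucc)
      (fun k h => (Fin.castSucc_lt_last k).ne (Fin.castSucc_injective _ h))
      (fun k => (Fin.castSucc_lt_last _).ne) (p := fun _ => gaussianPDFReal 0 1)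
      (fun _ => gaussianPDFReal 1 1) fun _ _ _ _ => gaussianPDFReal_zero_mul_congr 1
  exact ⟨_, _, φ, ψ, fun _ => isC1Density_gaussianPDFReal 0 one_ne_zero,
    fun _ => isC1Density_gaussianPDFReal 1 one_ne_zero,
    fun _ => .of_forall (deriv_log_gaussianPDFReal_ne zero_ne_one one_ne_zero),
    hφ, hnot, hl, hr, hobs, hint, fun f hf' => hf f hf'.1.continuous.measurable⟩
end
end
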